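/- Law of large numbers for lifetime sums: fix integers 0 ≤ q < d. Let P be a stationary and ergodic probability measure on Ω = [0,1]^{K^d} such that the marginal distribution function F^Q(t) = P(ω_Q ≤ t) is continuous in t ∈ [0,1] for every Q ∈ K^d, and let β̂_q(t) := limsup_{n→∞} |Λ_n|^{−1} E[β_q^n(t)]. Then |Λ_n|^{−1} L_q^n → ∫_0^1 β̂_q(t) dt as n → ∞, P-almost surely, where L_q^n := ∫_0^1 β_q^n(t) dt is the q-th lifetime sum. -/

import Mathlib

open MeasureTheory Filter Topology

noncomputable section

/-- An elementary cube in `ℝ^d`: the `i`-th component is the elementary interval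
`[l, l+1]` if the Boolean is `true` (nondegenerate) and `[l, l]` if `false` (degenerate). -/
abbrev ElemCube (d : ℕ) := Fin d → ℤ × Bool

/-- The dimension of an elementary cube: the number of nondegenerate components. -/
def cubeDim {d : ℕ} (Q : ElemCube d) : ℕ :=
  (Finset.univ.filter fun i => (Q i).2 = true).card

/-- The geometric realization of an elementary cube as a subset of `ℝ^d`. -/
def cubeSet {d : ℕ} (Q : ElemCube d) : Set (Fin d → ℝ) :=
  {x | ∀ i, x i ∈ Set.Icc ((Q i).1 : ℝ) ((Q i).1 + (if (Q i).2 then 1 else 0))}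

/-- A cubical set is a union of elementary cubes. -/
def IsCubical {d : ℕ} (X : Set (Fin d → ℝ)) : Prop :=
  ∃ S : Set (ElemCube d), X = ⋃ Q ∈ S, cubeSet Q

/-- The free `ℤ`-module generated by all elementary cubes of `ℝ^d` (all dimensions mixed). -/
abbrev CubChain (d : ℕ) := ElemCube d →₀ ℤ

/-- The cubical boundary of a single elementary cube, defined by induction on the ambient
dimension, following the inductive definition: in `ℝ¹`, `∂ [l,l+1]^ = [l+1]^ - [l]^` and
`∂ Q̂ = 0` for degenerate `Q`; and for `Q = I × P`,
`∂ Q̂ = (∂ Î) ⋄ P̂ + (-1)^(dim I) Î ⋄ (∂ P̂)`, where `⋄` is the cubical product. -/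
def boundaryCube : (d : ℕ) → ElemCube d → CubChain d
  | 0, _ => 0
  | d + 1, Q =>
      (if (Q 0).2 then
          Finsupp.single (Fin.cons ((Q 0).1 + 1, false) (fun i => Q i.succ)) (1 : ℤ)
            - Finsupp.single (Fin.cons ((Q 0).1, false) (fun i => Q i.succ)) (1 : ℤ)
        else 0)
      + (if (Q 0).2 then (-1 : ℤ) else 1) •
          (boundaryCube d (fun i => Q i.succ)).sum
            (fun R n => Finsupp.single (Fin.cons (Q 0) R) n)

/-- The cubical boundary operator, the `ℤ`-linear extension of `boundaryCube`. -/
def boundaryHom (d : ℕ) : CubChain d →ₗ[ℤ] CubChain d :=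
  Finsupp.lsum ℤ fun Q => LinearMap.toSpanSingleton ℤ (CubChain d) (boundaryCube d Q)

/-- `C_k^d(X)`: the submodule of chains supported on the `k`-dimensional elementary cubes
contained in `X`. -/
def chainsOn (d k : ℕ) (X : Set (Fin d → ℝ)) : Submodule ℤ (CubChain d) :=
  Finsupp.supported ℤ ℤ {Q : ElemCube d | cubeDim Q = k ∧ cubeSet Q ⊆ X}

/-- `Z_q(X) = ker ∂_q^X`, the cycles of the cubical set `X` in degree `q`. -/
def cycleMod (d q : ℕ) (X : Set (Fin d → ℝ)) : Submodule ℤ (CubChain d) :=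
  chainsOn d q X ⊓ LinearMap.ker (boundaryHom d)

/-- `B_q(X) = im ∂_{q+1}^X`, the boundaries of the cubical set `X` in degree `q`. -/
def boundaryMod (d q : ℕ) (X : Set (Fin d → ℝ)) : Submodule ℤ (CubChain d) :=
  Submodule.map (boundaryHom d) (chainsOn d (q + 1) X)

/-- The `q`-th Betti number of a cubical set: the rank of the free part of the `q`-th
cubical homology `H_q(X) = Z_q(X) / B_q(X)`. -/
def betti (d q : ℕ) (X : Set (Fin d → ℝ)) : ℕ :=
  Module.finrank ℤ
    (↥(cycleMod d q X) ⧸ (boundaryMod d q X).comap (cycleMod d q X).subtype)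

/-- `Λ_n = [-n, n]^d ⊆ ℝ^d`. -/
def lambda (d n : ℕ) : Set (Fin d → ℝ) := {x | ∀ i, x i ∈ Set.Icc (-(n : ℝ)) n}

/-- The configuration space `Ω = [0,1]^{K^d}` with the product σ-field. -/
abbrev Config (d : ℕ) := ElemCube d → unitInterval

/-- Translation of an elementary cube by `x ∈ ℤ^d`. -/
def translateCube {d : ℕ} (x : Fin d → ℤ) (Q : ElemCube d) : ElemCube d :=
  fun i => ((Q i).1 + x i, (Q i).2)

/-- The translation action `τ_x` on configurations: `(τ_x ω)_Q = ω_{-x+Q}`. -/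
def configShift {d : ℕ} (x : Fin d → ℤ) (ω : Config d) : Config d :=
  fun Q => ω (translateCube (-x) Q)

/-- Stationarity of a measure on configuration space: `P(τ_x⁻¹ A) = P(A)`. -/
def Stationary {d : ℕ} (P : Measure (Config d)) : Prop :=
  ∀ (x : Fin d → ℤ) (A : Set (Config d)), MeasurableSet A → P (configShift x ⁻¹' A) = P A

/-- Ergodicity of a measure on configuration space under translations. -/
def ErgodicConfig {d : ℕ} (P : Measure (Config d)) : Prop :=
  ∀ A : Set (Config d), MeasurableSet A →
    (∀ x : Fin d → ℤ, configShift x ⁻¹' A = A) → P A = 0 ∨ P A = 1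

/-- The random cubical set `X(t) = ⋃ {Q ∈ K^d : ω_Q ≤ t}`. -/
def cubSet {d : ℕ} (ω : Config d) (t : ℝ) : Set (Fin d → ℝ) :=
  ⋃ Q ∈ {Q : ElemCube d | (ω Q : ℝ) ≤ t}, cubeSet Q

/-- `β_q^n(t)(ω) = β_q(X(t) ∩ Λ_n)`. -/
def bettiN (d q n : ℕ) (t : ℝ) (ω : Config d) : ℕ :=
  betti d q (cubSet ω t ∩ lambda d n)

/-- `β̂_q(t) := limsup_{n → ∞} |Λ_n|⁻¹ E[β_q^n(t)]`, where `|Λ_n| = (2n)^d`. -/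
def betaHat (d q : ℕ) (P : Measure (Config d)) (t : ℝ) : ℝ :=
  limsup (fun n : ℕ => ((2 * (n : ℝ)) ^ d)⁻¹ * ∫ ω, (bettiN d q n t ω : ℝ) ∂P) atTop

/-- The lifetime sum `L_q^n = ∫_0^1 β_q^n(t) dt`. -/
def lifetimeSum (d q n : ℕ) (ω : Config d) : ℝ :=
  ∫ t in (0 : ℝ)..1, (bettiN d q n t ω : ℝ)

/-!
Removing one cube from a finite family of elementary cubes changes each Betti number by at most
one, and Betti numbers add up over boxes with no common face. Hence `β_q^n` differs from the sum
of the Betti numbers of the disjoint translates of `Λ_k`, with centres in a fixed coset of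
`(2k+1)ℤ^d`, by at most the number of cubes of `Λ_n` which these translates miss. Averaging over
the `(2k+1)^d` cosets replaces this sum by a sum over all translates of `Λ_k` inside `Λ_n`, up to
an error whose density `blockDefect d k` vanishes as `k → ∞`. The estimate survives integration
over `t ∈ [0, 1]` and over the probability space, so Wiener's ergodic theorem, applied to the
bounded function `L_q^k` for each fixed `k`, gives the limit.

Wiener's theorem follows from the weak-type maximal inequality, by Vitali covering in `ℤ^d`, and
from the density in `L²` of constants plus coboundaries of bounded functions, for which the
averages over boxes converge everywhere.
-/

/-! ### Ranks of homology groups -/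

section HomologyRank

open Module LinearMap

variable {R M : Type*} [CommRing R] [AddCommGroup M] [Module R M]

theorem sup_inf_sup_of_disjoint {A A' X Y X' Y' : Submodule R M} (h : Disjoint A A')
    (hX : X ≤ A) (hY : Y ≤ A) (hX' : X' ≤ A') (hY' : Y' ≤ A') :
    (X ⊔ X') ⊓ (Y ⊔ Y') = X ⊓ Y ⊔ X' ⊓ Y' := by
  refine le_antisymm ?_ (sup_le (inf_le_inf le_sup_left le_sup_left)
    (inf_le_inf le_sup_right le_sup_right))
  rintro c ⟨hc, hc'⟩
  obtain ⟨x, hx, x', hx', rfl⟩ := Submodule.mem_sup.1 hc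
  obtain ⟨y, hy, y', hy', hsum⟩ := Submodule.mem_sup.1 hc'
  obtain ⟨rfl, rfl⟩ : y = x ∧ y' = x' := by
    have hdiff : y - x = x' - y' := by rw [sub_eq_sub_iff_add_eq_add, hsum, add_comm]
    have hzero : y - x = 0 := Submodule.disjoint_def.1 h _ (sub_mem (hY hy) (hX hx))
      (hdiff ▸ sub_mem (hX' hx') (hY' hy'))
    exact ⟨sub_eq_zero.1 hzero, (sub_eq_zero.1 (hdiff ▸ hzero)).symm⟩
  exact Submodule.add_mem_sup ⟨hx, hy⟩ ⟨hx', hy'⟩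

theorem sup_inf_ker_of_disjoint {A A' X X' : Submodule R M} {f : M →ₗ[R] M} (h : Disjoint A A')
    (hA : A ≤ A.comap f) (hA' : A' ≤ A'.comap f) (hX : X ≤ A) (hX' : X' ≤ A') :
    (X ⊔ X') ⊓ ker f = X ⊓ ker f ⊔ X' ⊓ ker f := by
  refine le_antisymm ?_ (sup_le (inf_le_inf_right _ le_sup_left) (inf_le_inf_right _ le_sup_right))
  rintro c ⟨hc, hker⟩
  obtain ⟨x, hx, x', hx', rfl⟩ := Submodule.mem_sup.1 hc
  have hneg : f x = -f x' := eq_neg_of_add_eq_zero_left ((map_add f x x').symm.trans hker)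
  have hzero : f x = 0 := Submodule.disjoint_def.1 h _ (hA (hX hx))
    (hneg ▸ neg_mem (hA' (hX' hx')))
  exact Submodule.add_mem_sup ⟨hx, hzero⟩ ⟨hx', neg_eq_zero.1 (hneg ▸ hzero)⟩

/-- The rank of the homology at `C` of `D → C → M`, where both maps are restrictions of the
endomorphism `f`. No inclusion `f D ⊆ C ∩ ker f` is imposed: the boundaries which are divided out
are those lying in `C ∩ ker f`. -/
def homologyRank (f : M →ₗ[R] M) (C D : Submodule R M) : ℕ :=
  finrank R (↥(C ⊓ ker f) ⧸ (D.map f).comap (C ⊓ ker f).subtype)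

theorem homologyRank_map_equiv {f : M →ₗ[R] M} {e : M ≃ₗ[R] M} (h : ∀ c, f (e c) = e (f c))
    (C D : Submodule R M) :
    homologyRank f (C.map e.toLinearMap) (D.map e.toLinearMap) = homologyRank f C D := by
  have hker : (ker f).map e.toLinearMap = ker f := by
    ext c
    obtain ⟨c, rfl⟩ := e.surjective c
    simp [h]
  have hcycles : (C ⊓ ker f).map e.toLinearMap = C.map e.toLinearMap ⊓ ker f := by
    rw [Submodule.map_inf _ e.injective, hker]
  have hboundaries : (D.map e.toLinearMap).map f = (D.map f).map e.toLinearMap := by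
    rw [← Submodule.map_comp, ← Submodule.map_comp]
    exact congrArg (D.map ·) (LinearMap.ext h)
  rw [homologyRank, homologyRank, hboundaries]
  refine (Submodule.Quotient.equiv _ _ (e.ofSubmodules _ _ hcycles) ?_).finrank_eq.symm
  ext c
  simp [Submodule.mem_map_equiv]

variable [IsDomain R]

theorem finrank_sup_add_finrank_inf (X Y : Submodule R M) [IsNoetherian R X] [IsNoetherian R Y] :
    finrank R ↥(X ⊔ Y) + finrank R ↥(X ⊓ Y) = finrank R X + finrank R Y := by
  have : IsNoetherian R ↥(X ⊓ Y) := isNoetherian_of_le inf_le_left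
  have rank_eq := Submodule.rank_sup_add_rank_inf_eq X Y
  simp only [← finrank_eq_rank] at rank_eq
  exact_mod_cast rank_eq

theorem finrank_le_finrank_inf_add_finrank {X Y N : Submodule R M} [IsNoetherian R X]
    [IsNoetherian R Y] [IsNoetherian R N] (h : X ≤ Y ⊔ N) :
    finrank R X ≤ finrank R ↥(X ⊓ Y) + finrank R N := by
  have hXY := finrank_sup_add_finrank_inf X Y
  have hYN := finrank_sup_add_finrank_inf Y N
  have hle : finrank R ↥(X ⊔ Y) ≤ finrank R ↥(Y ⊔ N) :=
    Submodule.finrank_mono (sup_le h le_sup_left)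
  omega

theorem finrank_sup_of_disjoint {X Y : Submodule R M} [IsNoetherian R X] [IsNoetherian R Y]
    (h : Disjoint X Y) : finrank R ↥(X ⊔ Y) = finrank R X + finrank R Y := by
  rw [← finrank_sup_add_finrank_inf, h.eq_bot, finrank_bot, add_zero]

variable (f : M →ₗ[R] M) {C C' D D' : Submodule R M}

theorem homologyRank_add_finrank_boundaries [IsNoetherian R C] :
    homologyRank f C D + finrank R ↥(D.map f ⊓ (C ⊓ ker f)) = finrank R ↥(C ⊓ ker f) := by
  have : IsNoetherian R ↥(C ⊓ ker f) := isNoetherian_of_le inf_le_left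
  rw [← Submodule.finrank_quotient_add_finrank ((D.map f).comap (C ⊓ ker f).subtype),
    inf_comm, ← Submodule.map_comap_subtype,
    LinearEquiv.finrank_eq (Submodule.equivMapOfInjective _ (Submodule.injective_subtype _) _)]
  rfl

theorem homologyRank_bot_left : homologyRank f ⊥ D = 0 := by
  have h := homologyRank_add_finrank_boundaries f (C := ⊥) (D := D)
  rw [bot_inf_eq, inf_bot_eq, finrank_bot] at h
  exact h

theorem abs_homologyRank_sub_le {N N' : Submodule R M} [IsNoetherian R C'] [IsNoetherian R D']
    [IsNoetherian R N] [IsNoetherian R N'] (hC : C ≤ C') (hC' : C' ≤ C ⊔ N) (hD : D ≤ D')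
    (hD' : D' ≤ D ⊔ N') :
    |(homologyRank f C' D' : ℤ) - homologyRank f C D| ≤ finrank R N + finrank R N' := by
  have : IsNoetherian R C := isNoetherian_of_le hC
  have : IsNoetherian R D := isNoetherian_of_le hD
  have : IsNoetherian R ↥(C' ⊓ ker f) := isNoetherian_of_le inf_le_left
  have : IsNoetherian R ↥(D.map f ⊓ (C' ⊓ ker f)) := isNoetherian_of_le inf_le_left
  have : IsNoetherian R ↥(D'.map f ⊓ (C' ⊓ ker f)) := isNoetherian_of_le inf_le_left
  have hZ : C ⊓ ker f ≤ C' ⊓ ker f := inf_le_inf_right _ hC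
  have cycles_le : finrank R ↥(C' ⊓ ker f) ≤ finrank R ↥(C ⊓ ker f) + finrank R N := by
    have h := finrank_le_finrank_inf_add_finrank (inf_le_left.trans hC' : C' ⊓ ker f ≤ C ⊔ N)
    rwa [inf_right_comm, inf_eq_right.2 hC] at h
  have boundaries_le : finrank R ↥(D'.map f ⊓ (C' ⊓ ker f)) ≤
      finrank R ↥(D.map f ⊓ (C' ⊓ ker f)) + finrank R (N'.map f) := by
    have h := finrank_le_finrank_inf_add_finrank (X := D'.map f ⊓ (C' ⊓ ker f))
      (inf_le_left.trans ((Submodule.map_mono hD').trans (Submodule.map_sup D N' f).le))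
    rwa [inf_right_comm, inf_eq_right.2 (Submodule.map_mono hD)] at h
  have boundaries_inf_le : finrank R ↥(D.map f ⊓ (C' ⊓ ker f)) ≤
      finrank R ↥(D.map f ⊓ (C ⊓ ker f)) + finrank R N := by
    have h := finrank_le_finrank_inf_add_finrank (X := D.map f ⊓ (C' ⊓ ker f))
      (inf_le_right.trans (inf_le_left.trans hC'))
    rwa [inf_assoc, inf_right_comm C', inf_eq_right.2 hC] at h
  have cycles_mono := Submodule.finrank_mono hZ
  have boundaries_mono := Submodule.finrank_mono (inf_le_inf (Submodule.map_mono (f := f) hD) hZ)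
  have hN' : finrank R (N'.map f) ≤ finrank R N' := Submodule.finrank_map_le f N'
  have hrank := homologyRank_add_finrank_boundaries f (C := C) (D := D)
  have hrank' := homologyRank_add_finrank_boundaries f (C := C') (D := D')
  rw [abs_le]
  omega

theorem homologyRank_sup_of_disjoint {A A' : Submodule R M} [IsNoetherian R C]
    [IsNoetherian R C'] (h : Disjoint A A') (hA : A ≤ A.comap f) (hA' : A' ≤ A'.comap f)
    (hC : C ≤ A) (hC' : C' ≤ A') (hD : D ≤ A) (hD' : D' ≤ A') :
    homologyRank f (C ⊔ C') (D ⊔ D') = homologyRank f C D + homologyRank f C' D' := by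
  have hZ : C ⊓ ker f ≤ A := inf_le_left.trans hC
  have hZ' : C' ⊓ ker f ≤ A' := inf_le_left.trans hC'
  have : IsNoetherian R ↥(C ⊓ ker f) := isNoetherian_of_le inf_le_left
  have : IsNoetherian R ↥(C' ⊓ ker f) := isNoetherian_of_le inf_le_left
  have : IsNoetherian R ↥(D.map f ⊓ (C ⊓ ker f)) := isNoetherian_of_le inf_le_right
  have : IsNoetherian R ↥(D'.map f ⊓ (C' ⊓ ker f)) := isNoetherian_of_le inf_le_right
  have cycles := finrank_sup_of_disjoint (h.mono hZ hZ')
  have boundaries := finrank_sup_of_disjoint (X := D.map f ⊓ (C ⊓ ker f))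
    (Y := D'.map f ⊓ (C' ⊓ ker f)) (h.mono (inf_le_right.trans hZ) (inf_le_right.trans hZ'))
  rw [← sup_inf_ker_of_disjoint h hA hA' hC hC'] at cycles
  rw [← sup_inf_sup_of_disjoint h (Submodule.map_le_iff_le_comap.2 (hD.trans hA)) hZ
    (Submodule.map_le_iff_le_comap.2 (hD'.trans hA')) hZ', ← Submodule.map_sup,
    ← sup_inf_ker_of_disjoint h hA hA' hC hC'] at boundaries
  have hrank := homologyRank_add_finrank_boundaries f (C := C) (D := D)
  have hrank' := homologyRank_add_finrank_boundaries f (C := C') (D := D')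
  have hrankSup := homologyRank_add_finrank_boundaries f (C := C ⊔ C') (D := D ⊔ D')
  omega

end HomologyRank

/-! ### Betti numbers of sets of elementary cubes -/

section CubeBetti

open Module

variable {d : ℕ}

/-- The chains supported on the `k`-dimensional cubes of a set `S` of elementary cubes. -/
def cubeChains (k : ℕ) (S : Set (ElemCube d)) : Submodule ℤ (CubChain d) :=
  Finsupp.supported ℤ ℤ {Q | cubeDim Q = k ∧ Q ∈ S}

/-- The `q`-th Betti number of a set `S` of elementary cubes, which need not contain the faces of
its members, so that arbitrary sets of cubes can be removed from a cubical complex. -/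
def cubeBetti (q : ℕ) (S : Set (ElemCube d)) : ℕ :=
  homologyRank (boundaryHom d) (cubeChains q S) (cubeChains (q + 1) S)

theorem betti_eq_cubeBetti (q : ℕ) (X : Set (Fin d → ℝ)) :
    betti d q X = cubeBetti q {Q | cubeSet Q ⊆ X} := rfl

theorem cubeChains_mono (k : ℕ) {S T : Set (ElemCube d)} (h : S ⊆ T) :
    cubeChains k S ≤ cubeChains k T :=
  Finsupp.supported_mono fun _ hQ => ⟨hQ.1, h hQ.2⟩

theorem cubeChains_union (k : ℕ) (S T : Set (ElemCube d)) :
    cubeChains k (S ∪ T) = cubeChains k S ⊔ cubeChains k T := by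
  rw [cubeChains, cubeChains, cubeChains, ← Finsupp.supported_union]
  congr 1
  ext Q
  exact and_or_left

theorem cubeChains_le_supported (k : ℕ) {S A : Set (ElemCube d)} (h : S ⊆ A) :
    cubeChains k S ≤ Finsupp.supported ℤ ℤ A :=
  Finsupp.supported_mono fun _ hQ => h hQ.2

theorem isNoetherian_cubeChains (k : ℕ) {S : Set (ElemCube d)} (hS : S.Finite) :
    IsNoetherian ℤ (cubeChains k S) := by
  have : Finite {Q | cubeDim Q = k ∧ Q ∈ S} := (hS.subset fun _ hQ => hQ.2).to_subtype
  exact isNoetherian_of_linearEquiv (Finsupp.supportedEquivFinsupp _).symm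

theorem finrank_cubeChains (k : ℕ) (S : Set (ElemCube d)) :
    finrank ℤ (cubeChains k S) = {Q | cubeDim Q = k ∧ Q ∈ S}.ncard := by
  rw [cubeChains, (Finsupp.supportedEquivFinsupp _).finrank_eq, finrank, rank_finsupp_self']
  rfl

theorem finrank_cubeChains_add_succ_le_ncard (k : ℕ) {S : Set (ElemCube d)} (hS : S.Finite) :
    finrank ℤ (cubeChains k S) + finrank ℤ (cubeChains (k + 1) S) ≤ S.ncard := by
  have subset (l : ℕ) : {Q | cubeDim Q = l ∧ Q ∈ S} ⊆ S := fun _ hQ => hQ.2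
  have hdisj : Disjoint {Q | cubeDim Q = k ∧ Q ∈ S} {Q | cubeDim Q = k + 1 ∧ Q ∈ S} :=
    Set.disjoint_left.2 fun Q hQ hQ' => k.succ_ne_self (hQ'.1.symm.trans hQ.1)
  rw [finrank_cubeChains, finrank_cubeChains,
    ← Set.ncard_union_eq hdisj (hS.subset (subset k)) (hS.subset (subset (k + 1)))]
  exact Set.ncard_le_ncard (Set.union_subset (subset k) (subset (k + 1))) hS

theorem cubeBetti_empty (q : ℕ) : cubeBetti q (∅ : Set (ElemCube d)) = 0 := by
  have hbot : cubeChains q (∅ : Set (ElemCube d)) = ⊥ := by simp [cubeChains]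
  rw [cubeBetti, hbot, homologyRank_bot_left]

theorem abs_cubeBetti_sub_le_ncard_diff (q : ℕ) {S T : Set (ElemCube d)} (hT : T.Finite)
    (h : S ⊆ T) : |(cubeBetti q T : ℤ) - cubeBetti q S| ≤ (T \ S).ncard := by
  have hdiff : (T \ S).Finite := hT.sdiff
  have chains_le (k : ℕ) : cubeChains k T ≤ cubeChains k S ⊔ cubeChains k (T \ S) := by
    rw [← cubeChains_union, Set.union_sdiff_cancel h]
  have := isNoetherian_cubeChains q hT
  have := isNoetherian_cubeChains (q + 1) hT
  have := isNoetherian_cubeChains q hdiff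
  have := isNoetherian_cubeChains (q + 1) hdiff
  refine (abs_homologyRank_sub_le _ (cubeChains_mono q h) (chains_le q)
    (cubeChains_mono (q + 1) h) (chains_le (q + 1))).trans ?_
  exact_mod_cast finrank_cubeChains_add_succ_le_ncard q hdiff

/-- A set of elementary cubes containing all cubes which occur in the boundary of its members. -/
def IsFaceClosed (A : Set (ElemCube d)) : Prop :=
  ∀ Q ∈ A, ((boundaryCube d Q).support : Set (ElemCube d)) ⊆ A

theorem IsFaceClosed.biUnion {ι : Type*} {J : Set ι} {A : ι → Set (ElemCube d)}
    (hA : ∀ x ∈ J, IsFaceClosed (A x)) : IsFaceClosed (⋃ x ∈ J, A x) := by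
  intro Q hQ
  obtain ⟨x, hx, hQx⟩ := Set.mem_iUnion₂.1 hQ
  exact (hA x hx Q hQx).trans (Set.subset_biUnion_of_mem hx)

theorem IsFaceClosed.supported_le_comap {A : Set (ElemCube d)} (hA : IsFaceClosed A) :
    Finsupp.supported ℤ ℤ A ≤ (Finsupp.supported ℤ ℤ A).comap (boundaryHom d) := by
  intro c hc
  rw [Submodule.mem_comap, boundaryHom, Finsupp.lsum_apply]
  exact Submodule.sum_mem _ fun Q hQ => Submodule.smul_mem _ _ (hA Q (hc hQ))

theorem cubeBetti_union_of_disjoint (q : ℕ) {S T A B : Set (ElemCube d)} (hS : S.Finite)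
    (hT : T.Finite) (hA : IsFaceClosed A) (hB : IsFaceClosed B) (hSA : S ⊆ A) (hTB : T ⊆ B)
    (h : Disjoint A B) : cubeBetti q (S ∪ T) = cubeBetti q S + cubeBetti q T := by
  have := isNoetherian_cubeChains q hS
  have := isNoetherian_cubeChains q hT
  rw [cubeBetti, cubeChains_union, cubeChains_union]
  exact homologyRank_sup_of_disjoint _ (Finsupp.disjoint_supported_supported h)
    hA.supported_le_comap hB.supported_le_comap (cubeChains_le_supported q hSA)
    (cubeChains_le_supported q hTB) (cubeChains_le_supported _ hSA)
    (cubeChains_le_supported _ hTB)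

theorem cubeBetti_biUnion_of_pairwiseDisjoint {ι : Type*} (q : ℕ) {J : Finset ι}
    {S A : ι → Set (ElemCube d)} (hS : ∀ x ∈ J, (S x).Finite) (hA : ∀ x ∈ J, IsFaceClosed (A x))
    (hSA : ∀ x ∈ J, S x ⊆ A x) (h : (J : Set ι).PairwiseDisjoint A) :
    cubeBetti q (⋃ x ∈ J, S x) = ∑ x ∈ J, cubeBetti q (S x) := by
  classical
  induction J using Finset.induction_on with
  | empty => simp [cubeBetti_empty]
  | insert a J ha ih =>
    simp only [Finset.forall_mem_insert] at hS hA hSA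
    rw [Finset.coe_insert, Set.pairwiseDisjoint_insert_of_notMem (by simpa using ha)] at h
    rw [Finset.sum_insert ha, Finset.set_biUnion_insert, ← ih hS.2 hA.2 hSA.2 h.1]
    exact cubeBetti_union_of_disjoint q hS.1 (J.finite_toSet.biUnion hS.2) hA.1
      (IsFaceClosed.biUnion hA.2) hSA.1 (Set.iUnion₂_mono hSA.2)
      (Set.disjoint_iUnion₂_right.2 h.2)

theorem abs_cubeBetti_sub_sum_le {ι : Type*} (q : ℕ) {J : Finset ι} {S : Set (ElemCube d)}
    {W : Finset (ElemCube d)} {A : ι → Finset (ElemCube d)} (hSW : S ⊆ W)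
    (hA : ∀ x ∈ J, IsFaceClosed (A x : Set (ElemCube d))) (hAW : ∀ x ∈ J, A x ⊆ W)
    (h : (J : Set ι).PairwiseDisjoint A) :
    |(cubeBetti q S : ℤ) - ∑ x ∈ J, (cubeBetti q (S ∩ A x) : ℤ)| ≤
      W.card - ∑ x ∈ J, ((A x).card : ℤ) := by
  classical
  have hS : S.Finite := W.finite_toSet.subset hSW
  have additive : cubeBetti q (⋃ x ∈ J, S ∩ A x) = ∑ x ∈ J, cubeBetti q (S ∩ A x) :=
    cubeBetti_biUnion_of_pairwiseDisjoint q (fun _ _ => hS.inter_of_left _) hA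
      (fun _ _ => Set.inter_subset_right)
      fun x hx y hy hxy => Finset.disjoint_coe.2 (h hx hy hxy)
  have perturb := abs_cubeBetti_sub_le_ncard_diff q hS
    (Set.iUnion₂_subset fun (x : ι) (_ : x ∈ J) => Set.inter_subset_left (s := S) (t := ↑(A x)))
  have diff_subset : S \ ⋃ x ∈ J, S ∩ A x ⊆ ((W \ J.biUnion A : Finset _) : Set (ElemCube d)) := by
    rintro Q ⟨hQ, hQ'⟩
    simp only [Set.mem_iUnion, Set.mem_inter_iff, not_exists, not_and] at hQ'
    simpa using ⟨hSW hQ, fun x hx => hQ' x hx hQ⟩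
  have ncard_le := Set.ncard_le_ncard diff_subset (Finset.finite_toSet _)
  rw [Set.ncard_coe_finset] at ncard_le
  have card_add := Finset.card_sdiff_add_card_eq_card (Finset.biUnion_subset.2 hAW)
  rw [Finset.card_biUnion h] at card_add
  rw [additive] at perturb
  push_cast at perturb
  refine perturb.trans ?_
  rw [← Nat.cast_sum]
  omega

end CubeBetti

/-! ### Boxes in the integer lattice -/

section LatticeBox

variable {ι : Type*} [Fintype ι] [DecidableEq ι]

/-- The box of lattice points at sup-distance at most `n` from `c`. -/
def latticeBox (c : ι → ℤ) (n : ℕ) : Finset (ι → ℤ) :=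
  Finset.Icc (c - n) (c + n)

theorem mem_latticeBox {c z : ι → ℤ} {n : ℕ} :
    z ∈ latticeBox c n ↔ ∀ i, c i - n ≤ z i ∧ z i ≤ c i + n := by
  simp [latticeBox, Pi.le_def, forall_and]

theorem card_latticeBox (c : ι → ℤ) (n : ℕ) :
    (latticeBox c n).card = (2 * n + 1) ^ Fintype.card ι := by
  have hside (i : ι) : ((c + n) i + 1 - (c - n) i).toNat = 2 * n + 1 := by
    simp only [Pi.add_apply, Pi.sub_apply, Pi.natCast_apply]
    omega
  simp only [latticeBox, Pi.card_Icc, Int.card_Icc, hside, Finset.prod_const, Finset.card_univ]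

theorem coe_latticeBox (c : ι → ℤ) (n : ℕ) :
    (latticeBox c n : Set (ι → ℤ)) = Metric.closedBall c n := by
  ext z
  rw [Finset.mem_coe, mem_latticeBox, Metric.mem_closedBall, dist_pi_le_iff n.cast_nonneg]
  refine forall_congr' fun i => ?_
  have hdist : dist (z i) (c i) ≤ n ↔ |z i - c i| ≤ n := by
    rw [Int.dist_eq]
    exact_mod_cast Iff.rfl
  rw [hdist, abs_le]
  omega

theorem self_mem_latticeBox (c : ι → ℤ) (n : ℕ) : c ∈ latticeBox c n :=
  mem_latticeBox.2 fun i => by omega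

theorem card_latticeBox_pos (c : ι → ℤ) (n : ℕ) : 0 < ((latticeBox c n).card : ℝ) :=
  Nat.cast_pos.2 (Finset.card_pos.2 ⟨c, self_mem_latticeBox c n⟩)

theorem latticeBox_subset {c c' : ι → ℤ} {m n k : ℕ} (h : c' ∈ latticeBox c m)
    (hk : m + n ≤ k) : latticeBox c' n ⊆ latticeBox c k := by
  intro z hz
  rw [mem_latticeBox] at h hz ⊢
  intro i
  have := h i
  have := hz i
  omega

theorem exists_mem_latticeBox (c x : ι → ℤ) : ∃ n, x ∈ latticeBox c n := by
  obtain ⟨n, hn⟩ := exists_nat_ge (dist x c)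
  exact ⟨n, by rwa [← Finset.mem_coe, coe_latticeBox, Metric.mem_closedBall]⟩

theorem sum_latticeBox_add {M : Type*} [AddCommMonoid M] (f : (ι → ℤ) → M) (c x : ι → ℤ) (n : ℕ) :
    ∑ y ∈ latticeBox c n, f (y + x) = ∑ z ∈ latticeBox (c + x) n, f z := by
  have : latticeBox (c + x) n = (latticeBox c n).map (addRightEmbedding x) := by
    rw [latticeBox, latticeBox, Finset.map_add_right_Icc, sub_add_eq_add_sub, add_right_comm]
  rw [this, Finset.sum_map]
  rfl

theorem sum_latticeBox_neg {M : Type*} [AddCommMonoid M] (f : (ι → ℤ) → M) (n : ℕ) :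
    ∑ x ∈ latticeBox 0 n, f (-x) = ∑ x ∈ latticeBox 0 n, f x := by
  refine Finset.sum_equiv (Equiv.neg _) (fun x => ?_) fun _ _ => rfl
  simp only [mem_latticeBox, Equiv.neg_apply, Pi.neg_apply, Pi.zero_apply]
  exact forall_congr' fun i => by omega

theorem tendsto_card_latticeBox_add_div (c c' : ι → ℤ) (r : ℕ) :
    Tendsto (fun n => ((latticeBox c (n + r)).card : ℝ) / (latticeBox c' n).card) atTop (𝓝 1) := by
  have h := (tendsto_add_mul_div_add_mul_atTop_nhds (2 * r + 1 : ℝ) 1 2 two_ne_zero).pow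
    (Fintype.card ι)
  rw [div_self two_ne_zero, one_pow] at h
  refine h.congr fun n => ?_
  rw [card_latticeBox, card_latticeBox, div_pow]
  push_cast
  ring

/-- A Vitali selection; enlarging a box by the factor `5` costs at most `5 ^ card ι`. -/
theorem exists_pairwiseDisjoint_latticeBox (D : Finset (ι → ℤ)) (r : (ι → ℤ) → ℕ) :
    ∃ U ⊆ D, (U : Set (ι → ℤ)).PairwiseDisjoint (fun x => latticeBox x (r x)) ∧
      D.card ≤ 5 ^ Fintype.card ι * ∑ x ∈ U, (latticeBox x (r x)).card := by
  obtain ⟨U, hUD, hdisj, hcover⟩ :=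
    Vitali.exists_disjoint_subfamily_covering_enlargement_closedBall (D : Set (ι → ℤ)) id
      (fun x => (r x : ℝ)) (D.sup r : ℕ) (fun x hx => by exact_mod_cast Finset.le_sup hx) 5
      (by norm_num)
  lift U to Finset (ι → ℤ) using D.finite_toSet.subset hUD
  have hDU : D ⊆ U.biUnion fun x => latticeBox x (5 * r x) := by
    intro a ha
    obtain ⟨x, hx, hax⟩ := hcover a ha
    refine Finset.mem_biUnion.2 ⟨x, hx, ?_⟩
    rw [← Finset.mem_coe, coe_latticeBox, Nat.cast_mul]
    exact hax (Metric.mem_closedBall_self (Nat.cast_nonneg _))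
  have hcard (x : ι → ℤ) :
      (latticeBox x (5 * r x)).card ≤ 5 ^ Fintype.card ι * (latticeBox x (r x)).card := by
    rw [card_latticeBox, card_latticeBox, ← mul_pow]
    gcongr
    omega
  refine ⟨U, Finset.coe_subset.1 hUD, fun x hx y hy hxy => ?_, ?_⟩
  · rw [Function.onFun, ← Finset.disjoint_coe, coe_latticeBox, coe_latticeBox]
    exact hdisj hx hy hxy
  · rw [Finset.mul_sum]
    exact (Finset.card_le_card hDU).trans
      (Finset.card_biUnion_le.trans (Finset.sum_le_sum fun x _ => hcard x))

theorem mul_card_le_sum_of_forall_exists_latticeBox {u : (ι → ℤ) → ENNReal} {l : ENNReal}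
    {M N : ℕ} {D : Finset (ι → ℤ)} (hD : D ⊆ latticeBox 0 M)
    (h : ∀ x ∈ D, ∃ n ≤ N, l * (latticeBox x n).card ≤ ∑ y ∈ latticeBox x n, u y) :
    l * D.card ≤ 5 ^ Fintype.card ι * ∑ z ∈ latticeBox 0 (M + N), u z := by
  choose! r hrN hr using h
  obtain ⟨U, hUD, hdisj, hcard⟩ := exists_pairwiseDisjoint_latticeBox D r
  have hcard_cast : (D.card : ENNReal)
      ≤ 5 ^ Fintype.card ι * ∑ x ∈ U, ((latticeBox x (r x)).card : ENNReal) := by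
    exact_mod_cast hcard
  calc l * D.card
      ≤ l * (5 ^ Fintype.card ι * ∑ x ∈ U, ((latticeBox x (r x)).card : ENNReal)) := by gcongr
    _ = 5 ^ Fintype.card ι * ∑ x ∈ U, l * (latticeBox x (r x)).card := by
        rw [← Finset.mul_sum, mul_left_comm]
    _ ≤ 5 ^ Fintype.card ι * ∑ x ∈ U, ∑ y ∈ latticeBox x (r x), u y := by
        gcongr with x hx
        exact hr x (hUD hx)
    _ = 5 ^ Fintype.card ι * ∑ z ∈ U.biUnion fun x => latticeBox x (r x), u z := by
        rw [Finset.sum_biUnion hdisj]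
    _ ≤ 5 ^ Fintype.card ι * ∑ z ∈ latticeBox 0 (M + N), u z := by
        gcongr
        exact Finset.biUnion_subset.2 fun x hx =>
          latticeBox_subset (hD (hUD hx)) (Nat.add_le_add_left (hrN x (hUD hx)) M)

end LatticeBox

/-! ### Wiener's ergodic theorem for `ℤ^d`-actions -/

section ErgodicTheorem

theorem ae_forall_vadd_eq {G α β : Type*} [Countable G] [MeasurableSpace α] [AddGroup G]
    [AddAction G α] [MeasurableConstVAdd G α] {μ : Measure α} [VAddInvariantMeasure G α μ]
    {f g : α → β} (h : f =ᵐ[μ] g) : ∀ᵐ a ∂μ, ∀ x : G, f (x +ᵥ a) = g (x +ᵥ a) :=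
  ae_all_iff.2 fun x => (measurePreserving_vadd x μ).quasiMeasurePreserving.ae h

/-- An a.e. invariant set agrees a.e. with the intersection of its translates. -/
theorem ergodicVAdd_of_forall_preimage_vadd_eq {G α : Type*} [Countable G] [MeasurableSpace α]
    [AddGroup G] [AddAction G α] [MeasurableConstVAdd G α] {μ : Measure α}
    [VAddInvariantMeasure G α μ] (h : ∀ s : Set α, MeasurableSet s →
      (∀ x : G, (x +ᵥ ·) ⁻¹' s = s) → EventuallyConst s (ae μ)) : ErgodicVAdd G α μ where
  aeconst_of_forall_preimage_vadd_ae_eq {s} hs hinv := by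
    have hcore : (⋂ x : G, (x +ᵥ ·) ⁻¹' s) =ᵐ[μ] s := by
      simpa only [Set.iInter_const] using Filter.EventuallyEq.countable_iInter hinv
    refine (h _ (.iInter fun x => measurable_const_vadd x hs) fun y => ?_).congr hcore
    simp only [Set.preimage_iInter, ← Set.preimage_comp, Function.comp_def, vadd_vadd]
    exact (Equiv.addRight y).iInf_congr fun _ => rfl

theorem exists_ae_eq_const_of_forall_vadd_ae_eq {G α : Type*} [MeasurableSpace α] [AddGroup G]
    [AddAction G α] {μ : Measure α} [ErgodicVAdd G α μ] {h : α → ℝ} (hm : Measurable h)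
    (hinv : ∀ x : G, (fun a => h (x +ᵥ a)) =ᵐ[μ] h) : ∃ c, h =ᵐ[μ] Function.const α c := by
  refine exists_eventuallyEq_const_of_forall_separating MeasurableSet fun U hU => ?_
  refine eventuallyConst_set.1 (aeconst_of_forall_preimage_vadd_ae_eq (G := G)
    (s := h ⁻¹' U) (hm hU).nullMeasurableSet fun x => ?_)
  filter_upwards [hinv x] with a ha
  exact congrArg (· ∈ U) ha

theorem lintegral_sum_vadd {G α : Type*} [MeasurableSpace α] [AddGroup G] [AddAction G α]
    [MeasurableConstVAdd G α] {μ : Measure α} [VAddInvariantMeasure G α μ] {h : α → ENNReal}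
    (hh : Measurable h) (s : Finset G) :
    ∫⁻ a, ∑ x ∈ s, h (x +ᵥ a) ∂μ = s.card * ∫⁻ a, h a ∂μ := by
  have hx (x : G) : Measurable fun a => h (x +ᵥ a) := hh.comp (measurable_const_vadd x)
  simp only [lintegral_finsetSum _ fun x _ => hx x,
    (measurePreserving_vadd _ μ).lintegral_comp hh, Finset.sum_const, nsmul_eq_mul]

variable {ι : Type*} [Fintype ι] [DecidableEq ι] {α : Type*} [AddAction (ι → ℤ) α]

theorem sum_latticeBox_vadd {M : Type*} [AddCommMonoid M] (f : α → M) (n : ℕ) (x : ι → ℤ) (a : α) :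
    ∑ y ∈ latticeBox (0 : ι → ℤ) n, f (y +ᵥ x +ᵥ a) = ∑ z ∈ latticeBox x n, f (z +ᵥ a) := by
  simpa only [vadd_vadd, zero_add] using sum_latticeBox_add (fun z => f (z +ᵥ a)) 0 x n

section MaximalInequality

/-- The points at which the average of `h` over the box of radius `n` is at least `l`. -/
def largeBoxAverage (ι : Type*) [Fintype ι] [DecidableEq ι] [AddAction (ι → ℤ) α]
    (h : α → ENNReal) (l : ENNReal) (n : ℕ) : Set α :=
  {a | l * (latticeBox (0 : ι → ℤ) n).card ≤ ∑ x ∈ latticeBox (0 : ι → ℤ) n, h (x +ᵥ a)}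

variable [MeasurableSpace α] [MeasurableConstVAdd (ι → ℤ) α] {μ : Measure α} {h : α → ENNReal}

theorem measurableSet_largeBoxAverage (hh : Measurable h) (l : ENNReal) (n : ℕ) :
    MeasurableSet (largeBoxAverage ι h l n) :=
  measurableSet_le measurable_const
    (Finset.measurable_fun_sum _ fun x _ => hh.comp (measurable_const_vadd x))

variable [VAddInvariantMeasure (ι → ℤ) α μ]

theorem mul_card_mul_measure_accumulate_largeBoxAverage_le (hh : Measurable h) (l : ENNReal)
    (M N : ℕ) :
    l * ((latticeBox (0 : ι → ℤ) M).card * μ (Set.accumulate (largeBoxAverage ι h l) N))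
      ≤ 5 ^ Fintype.card ι * ((latticeBox (0 : ι → ℤ) (M + N)).card * ∫⁻ a, h a ∂μ) := by
  classical
  set E := Set.accumulate (largeBoxAverage ι h l) N
  have hEm : MeasurableSet E :=
    .biUnion (Set.to_countable _) fun n _ => measurableSet_largeBoxAverage hh l n
  have hind : Measurable (E.indicator (1 : α → ENNReal)) := measurable_one.indicator hEm
  have hpointwise (a : α) : l * ∑ x ∈ latticeBox (0 : ι → ℤ) M, E.indicator 1 (x +ᵥ a)
      ≤ 5 ^ Fintype.card ι * ∑ x ∈ latticeBox (0 : ι → ℤ) (M + N), h (x +ᵥ a) := by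
    simp only [Set.indicator_apply, Pi.one_apply, ← Finset.natCast_card_filter]
    refine mul_card_le_sum_of_forall_exists_latticeBox (Finset.filter_subset _ _) fun x hx => ?_
    obtain ⟨n, hn, hle⟩ := Set.mem_accumulate.1 (Finset.mem_filter.1 hx).2
    rw [largeBoxAverage, Set.mem_ofPred_eq, sum_latticeBox_vadd, card_latticeBox] at hle
    exact ⟨n, hn, by rwa [card_latticeBox]⟩
  calc l * ((latticeBox (0 : ι → ℤ) M).card * μ E)
      = l * ∫⁻ a, ∑ x ∈ latticeBox (0 : ι → ℤ) M, E.indicator 1 (x +ᵥ a) ∂μ := by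
        rw [lintegral_sum_vadd hind, lintegral_indicator_one hEm]
    _ ≤ ∫⁻ a, l * ∑ x ∈ latticeBox (0 : ι → ℤ) M, E.indicator 1 (x +ᵥ a) ∂μ :=
        lintegral_const_mul_le _ _
    _ ≤ ∫⁻ a, 5 ^ Fintype.card ι * ∑ x ∈ latticeBox (0 : ι → ℤ) (M + N), h (x +ᵥ a) ∂μ :=
        lintegral_mono hpointwise
    _ = 5 ^ Fintype.card ι * ((latticeBox (0 : ι → ℤ) (M + N)).card * ∫⁻ a, h a ∂μ) := by
        rw [lintegral_const_mul' _ _ (ENNReal.pow_ne_top ENNReal.ofNat_ne_top),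
          lintegral_sum_vadd hh]

theorem mul_measure_iUnion_largeBoxAverage_le_of_measurable (hh : Measurable h) (l : ENNReal) :
    l * μ (⋃ n, largeBoxAverage ι h l n) ≤ 5 ^ Fintype.card ι * ∫⁻ a, h a ∂μ := by
  rw [measure_iUnion_eq_iSup_accumulate, ENNReal.mul_iSup]
  refine iSup_le fun N => ?_
  have hratio : Tendsto (fun M => ((latticeBox (0 : ι → ℤ) (M + N)).card : ENNReal)
      / (latticeBox (0 : ι → ℤ) M).card) atTop (𝓝 1) := by
    have := ENNReal.tendsto_ofReal (tendsto_card_latticeBox_add_div (0 : ι → ℤ) 0 N)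
    refine (ENNReal.ofReal_one ▸ this).congr fun M => ?_
    rw [ENNReal.ofReal_div_of_pos (card_latticeBox_pos 0 M), ENNReal.ofReal_natCast,
      ENNReal.ofReal_natCast]
  have hlim := ENNReal.Tendsto.const_mul
    (ENNReal.Tendsto.mul_const hratio (.inl one_ne_zero) (b := ∫⁻ a, h a ∂μ))
    (.inr (ENNReal.pow_ne_top ENNReal.ofNat_ne_top)) (a := 5 ^ Fintype.card ι)
  rw [one_mul] at hlim
  refine ge_of_tendsto' hlim fun M => ?_
  have hM : ((latticeBox (0 : ι → ℤ) M).card : ENNReal) ≠ 0 :=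
    Nat.cast_ne_zero.2 (Finset.card_ne_zero_of_mem (self_mem_latticeBox 0 M))
  rw [← ENNReal.mul_div_right_comm, ← mul_div_assoc,
    ENNReal.le_div_iff_mul_le (.inl hM) (.inl (ENNReal.natCast_ne_top _)), mul_assoc,
    mul_comm (μ _)]
  exact mul_card_mul_measure_accumulate_largeBoxAverage_le hh l M N

theorem mul_measure_iUnion_largeBoxAverage_le (hh : AEMeasurable h μ) (l : ENNReal) :
    l * μ (⋃ n, largeBoxAverage ι h l n) ≤ 5 ^ Fintype.card ι * ∫⁻ a, h a ∂μ := by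
  have hae : ⋃ n, largeBoxAverage ι h l n =ᵐ[μ] ⋃ n, largeBoxAverage ι (hh.mk h) l n := by
    rw [eventuallyEq_set]
    filter_upwards [ae_forall_vadd_eq (G := ι → ℤ) hh.ae_eq_mk] with a ha
    simp only [largeBoxAverage, Set.mem_iUnion, Set.mem_ofPred_eq, ha]
  rw [measure_congr hae, lintegral_congr_ae hh.ae_eq_mk]
  exact mul_measure_iUnion_largeBoxAverage_le_of_measurable hh.measurable_mk l

end MaximalInequality

section BoxAverage

/-- The average of `f` along the part of the orbit of `a` indexed by the box of radius `n`. -/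
def boxAverage (ι : Type*) [Fintype ι] [DecidableEq ι] [AddAction (ι → ℤ) α] (f : α → ℝ) (n : ℕ)
    (a : α) : ℝ :=
  (∑ x ∈ latticeBox (0 : ι → ℤ) n, f (x +ᵥ a)) / (latticeBox (0 : ι → ℤ) n).card

theorem boxAverage_add (f g : α → ℝ) (n : ℕ) (a : α) :
    boxAverage ι (f + g) n a = boxAverage ι f n a + boxAverage ι g n a := by
  simp only [boxAverage, Pi.add_apply, Finset.sum_add_distrib, add_div]

theorem boxAverage_smul (c : ℝ) (f : α → ℝ) (n : ℕ) (a : α) :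
    boxAverage ι (c • f) n a = c * boxAverage ι f n a := by
  simp only [boxAverage, Pi.smul_apply, smul_eq_mul, ← Finset.mul_sum, mul_div_assoc]

theorem boxAverage_const (c : ℝ) (n : ℕ) (a : α) : boxAverage ι (fun _ => c) n a = c := by
  rw [boxAverage, Finset.sum_const, nsmul_eq_mul,
    mul_div_cancel_left₀ _ (card_latticeBox_pos _ n).ne']

theorem abs_boxAverage_lt_of_notMem_largeBoxAverage {f : α → ℝ} {δ : ℝ} {n : ℕ} {a : α}
    (h : a ∉ largeBoxAverage ι (fun a => ‖f a‖ₑ) (ENNReal.ofReal δ) n) :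
    |boxAverage ι f n a| < δ := by
  have hlt : ENNReal.ofReal |∑ x ∈ latticeBox (0 : ι → ℤ) n, f (x +ᵥ a)|
      < ENNReal.ofReal (δ * (latticeBox (0 : ι → ℤ) n).card) := by
    rw [← Real.enorm_eq_ofReal_abs, ENNReal.ofReal_mul' (Nat.cast_nonneg _),
      ENNReal.ofReal_natCast]
    exact (enorm_sum_le _ _).trans_lt (not_le.1 h)
  rw [boxAverage, abs_div, Nat.abs_cast, div_lt_iff₀ (card_latticeBox_pos _ n)]
  exact (ENNReal.ofReal_lt_ofReal_iff_of_nonneg (abs_nonneg _)).1 hlt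

theorem abs_sum_sub_sum_le_of_subset {β : Type*} {φ : β → ℝ} {C : ℝ}
    (hC : ∀ z, |φ z| ≤ C) {S B : Finset β} (hS : S ⊆ B) :
    |∑ z ∈ B, φ z - ∑ z ∈ S, φ z| ≤ C * (B.card - S.card) := by
  classical
  rw [← Finset.sum_sdiff_eq_sub hS, ← Nat.cast_sub (Finset.card_le_card hS),
    ← Finset.card_sdiff_of_subset hS, mul_comm, ← nsmul_eq_mul]
  exact (Finset.abs_sum_le_sum_abs _ _).trans (Finset.sum_le_card_nsmul _ _ _ fun z _ => hC z)

/-- Telescoping: only the orbit points in the symmetric difference of the two boxes survive. -/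
theorem tendsto_boxAverage_coboundary {g : α → ℝ} {C : ℝ} (hC : ∀ a, |g a| ≤ C) (x : ι → ℤ)
    (a : α) : Tendsto (fun n => boxAverage ι (fun b => g (x +ᵥ b) - g b) n a) atTop (𝓝 0) := by
  obtain ⟨r, hr⟩ := exists_mem_latticeBox 0 x
  let φ (z : ι → ℤ) : ℝ := g (z +ᵥ a)
  have hbound (n : ℕ) : ‖boxAverage ι (fun b => g (x +ᵥ b) - g b) n a‖ ≤ 2 * C *
      ((latticeBox (0 : ι → ℤ) (n + r)).card / (latticeBox (0 : ι → ℤ) n).card - 1) := by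
    have hshift : ∑ y ∈ latticeBox (0 : ι → ℤ) n, g (x +ᵥ y +ᵥ a) = ∑ z ∈ latticeBox x n, φ z := by
      simp only [vadd_vadd, add_comm x]
      simpa only [zero_add] using sum_latticeBox_add φ 0 x n
    have h₀ := abs_sum_sub_sum_le_of_subset (φ := φ) (fun z => hC _)
      (latticeBox_subset (self_mem_latticeBox (0 : ι → ℤ) r) (add_comm r n).le)
    have hₓ := abs_sum_sub_sum_le_of_subset (φ := φ) (fun z => hC _)
      (latticeBox_subset hr (add_comm r n).le)
    rw [card_latticeBox x, ← card_latticeBox 0] at hₓ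
    rw [boxAverage, Finset.sum_sub_distrib, hshift, Real.norm_eq_abs, abs_div, Nat.abs_cast,
      div_sub_one (card_latticeBox_pos 0 n).ne', ← mul_div_assoc]
    gcongr
    rw [abs_le] at h₀ hₓ ⊢
    constructor <;> linarith
  refine squeeze_zero_norm hbound ?_
  simpa only [sub_self, mul_zero] using
    ((tendsto_card_latticeBox_add_div (0 : ι → ℤ) 0 r).sub_const 1).const_mul (2 * C)

/-- The averages of `f` over growing boxes tend to `0` along almost every orbit. -/
def HasVanishingAverages (ι : Type*) [Fintype ι] [DecidableEq ι] [AddAction (ι → ℤ) α]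
    [MeasurableSpace α] (f : α → ℝ) (μ : Measure α) : Prop :=
  ∀ᵐ a ∂μ, Tendsto (fun n => boxAverage ι f n a) atTop (𝓝 0)

namespace HasVanishingAverages

variable [MeasurableSpace α] {μ : Measure α} {f g : α → ℝ}

theorem add (hf : HasVanishingAverages ι f μ) (hg : HasVanishingAverages ι g μ) :
    HasVanishingAverages ι (f + g) μ := by
  filter_upwards [hf, hg] with a hfa hga
  simpa only [boxAverage_add, add_zero] using hfa.add hga

theorem const_smul (hf : HasVanishingAverages ι f μ) (c : ℝ) :
    HasVanishingAverages ι (c • f) μ := by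
  filter_upwards [hf] with a hfa
  simpa only [boxAverage_smul, mul_zero] using hfa.const_mul c

variable [MeasurableConstVAdd (ι → ℤ) α] [VAddInvariantMeasure (ι → ℤ) α μ]

theorem congr_ae (hf : HasVanishingAverages ι f μ) (hfg : f =ᵐ[μ] g) :
    HasVanishingAverages ι g μ := by
  filter_upwards [hf, ae_forall_vadd_eq (G := ι → ℤ) hfg] with a hfa ha
  simpa only [boxAverage, ha] using hfa

theorem mul_measure_not_eventually_abs_boxAverage_lt_le (hg : HasVanishingAverages ι g μ)
    (hfg : AEStronglyMeasurable (f - g) μ) {δ : ℝ} (hδ : 0 < δ) :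
    ENNReal.ofReal δ * μ {a | ¬ ∀ᶠ n in atTop, |boxAverage ι f n a| < δ + δ}
      ≤ 5 ^ Fintype.card ι * eLpNorm (f - g) 1 μ := by
  rw [eLpNorm_one_eq_lintegral_enorm]
  refine le_trans (mul_le_mul_right (measure_mono_ae ?_) _)
    (mul_measure_iUnion_largeBoxAverage_le hfg.enorm (ENNReal.ofReal δ))
  filter_upwards [hg] with a hga hbad
  by_contra hmem
  have hsmall (n : ℕ) : a ∉ largeBoxAverage ι (fun b => ‖(f - g) b‖ₑ) (ENNReal.ofReal δ) n :=
    fun hn => hmem (Set.mem_iUnion.2 ⟨n, hn⟩)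
  refine hbad ?_
  filter_upwards [hga.abs.eventually_lt_const (by rwa [abs_zero])] with n hn
  calc |boxAverage ι f n a| = |boxAverage ι (f - g) n a + boxAverage ι g n a| := by
        rw [← boxAverage_add, sub_add_cancel]
    _ ≤ |boxAverage ι (f - g) n a| + |boxAverage ι g n a| := abs_add_le _ _
    _ < δ + δ := add_lt_add (abs_boxAverage_lt_of_notMem_largeBoxAverage (hsmall n)) hn

/-- Banach's principle: a maximal inequality makes a.e. convergence stable under `L¹` limits. -/
theorem of_forall_exists_eLpNorm_sub_le (h : ∀ ε ≠ 0, ∃ g, HasVanishingAverages ι g μ ∧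
    AEStronglyMeasurable (f - g) μ ∧ eLpNorm (f - g) 1 μ ≤ ε) : HasVanishingAverages ι f μ := by
  have hsmall (δ : ℝ) (hδ : 0 < δ) : ∀ᵐ a ∂μ, ∀ᶠ n in atTop, |boxAverage ι f n a| < δ + δ := by
    have h0 : ENNReal.ofReal δ * μ {a | ¬ ∀ᶠ n in atTop, |boxAverage ι f n a| < δ + δ} ≤ 0 := by
      have hlim : Tendsto (fun ε : ENNReal => 5 ^ Fintype.card ι * ε) (𝓝[≠] 0) (𝓝 0) := by
        have := ENNReal.Tendsto.const_mul (tendsto_id (x := 𝓝 (0 : ENNReal)))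
          (.inr (ENNReal.pow_ne_top ENNReal.ofNat_ne_top)) (a := 5 ^ Fintype.card ι)
        rw [mul_zero] at this
        exact this.mono_left nhdsWithin_le_nhds
      refine ge_of_tendsto hlim ?_
      filter_upwards [self_mem_nhdsWithin] with ε hε
      obtain ⟨g, hg, hfg, hle⟩ := h ε hε
      exact (hg.mul_measure_not_eventually_abs_boxAverage_lt_le hfg hδ).trans (by gcongr)
    rw [ae_iff]
    exact (mul_eq_zero.1 (nonpos_iff_eq_zero.1 h0)).resolve_left (ENNReal.ofReal_pos.2 hδ).ne'
  have hall : ∀ᵐ a ∂μ, ∀ j : ℕ, ∀ᶠ n in atTop,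
      |boxAverage ι f n a| < 1 / ((j : ℝ) + 1) + 1 / ((j : ℝ) + 1) :=
    ae_all_iff.2 fun j => hsmall _ Nat.one_div_pos_of_nat
  filter_upwards [hall] with a ha
  refine Metric.tendsto_nhds.2 fun ε hε => ?_
  obtain ⟨j, hj⟩ := exists_nat_one_div_lt (half_pos hε)
  filter_upwards [ha j] with n hn
  rw [Real.dist_0_eq_abs]
  linarith

end HasVanishingAverages

end BoxAverage

section ErgodicVAdd

variable [MeasurableSpace α] [MeasurableConstVAdd (ι → ℤ) α] {μ : Measure α}

/-- The square-integrable functions whose box averages vanish almost everywhere. -/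
def vanishingAverages (ι : Type*) [Fintype ι] [DecidableEq ι] [AddAction (ι → ℤ) α]
    [MeasurableConstVAdd (ι → ℤ) α] (μ : Measure α) [VAddInvariantMeasure (ι → ℤ) α μ] :
    Submodule ℝ (Lp ℝ 2 μ) where
  carrier := {F | HasVanishingAverages ι F μ}
  add_mem' hF hG := (hF.add hG).congr_ae (Lp.coeFn_add _ _).symm
  zero_mem' := by
    have hzero : HasVanishingAverages ι (0 : α → ℝ) μ := .of_forall fun a =>
      tendsto_const_nhds.congr fun n => (boxAverage_const 0 n a).symm
    exact hzero.congr_ae (Lp.coeFn_zero _ _ _).symm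
  smul_mem' c F hF := (hF.const_smul c).congr_ae (Lp.coeFn_smul c F).symm

section Invariant

variable [VAddInvariantMeasure (ι → ℤ) α μ]

theorem isClosed_vanishingAverages [IsProbabilityMeasure μ] :
    IsClosed (vanishingAverages ι μ : Set (Lp ℝ 2 μ)) := by
  refine isClosed_of_closure_subset fun F hF => ?_
  refine HasVanishingAverages.of_forall_exists_eLpNorm_sub_le fun ε hε => ?_
  obtain ⟨G, hG, hFG⟩ := EMetric.mem_closure_iff.1 hF ε (pos_iff_ne_zero.2 hε)
  have hm : AEStronglyMeasurable (F - G : α → ℝ) μ :=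
    (Lp.aestronglyMeasurable F).sub (Lp.aestronglyMeasurable G)
  refine ⟨G, hG, hm, ?_⟩
  rw [Lp.edist_def] at hFG
  exact (eLpNorm_le_eLpNorm_of_exponent_le one_le_two hm).trans hFG.le

theorem indicatorConstLp_preimage_vadd_sub_mem_vanishingAverages [IsFiniteMeasure μ] {A : Set α}
    (hA : MeasurableSet A) (x : ι → ℤ) :
    indicatorConstLp 2 (measurable_const_vadd x hA) (measure_ne_top μ _) (1 : ℝ) -
      indicatorConstLp 2 hA (measure_ne_top μ _) 1 ∈ vanishingAverages ι μ := by
  have hbound (a : α) : |A.indicator (fun _ => (1 : ℝ)) a| ≤ 1 := by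
    by_cases ha : a ∈ A <;> simp [ha]
  have hcob : HasVanishingAverages ι
      (fun a => A.indicator (fun _ => (1 : ℝ)) (x +ᵥ a) - A.indicator (fun _ => 1) a) μ :=
    .of_forall (tendsto_boxAverage_coboundary hbound x)
  refine hcob.congr_ae ?_
  filter_upwards [Lp.coeFn_sub (indicatorConstLp 2 (measurable_const_vadd x hA)
      (measure_ne_top μ _) (1 : ℝ)) (indicatorConstLp 2 hA (measure_ne_top μ _) 1),
    indicatorConstLp_coeFn (p := 2) (hs := measurable_const_vadd x hA)
      (hμs := measure_ne_top μ _) (c := (1 : ℝ)),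
    indicatorConstLp_coeFn (p := 2) (hs := hA) (hμs := measure_ne_top μ _) (c := (1 : ℝ))]
    with a hsub hpre hA'
  rw [hsub, Pi.sub_apply, hpre, hA']
  rfl

theorem vadd_ae_eq_of_mem_orthogonal_vanishingAverages [IsFiniteMeasure μ] {h : Lp ℝ 2 μ}
    (hh : h ∈ (vanishingAverages ι μ)ᗮ) (x : ι → ℤ) : (fun a => h (x +ᵥ a)) =ᵐ[μ] h := by
  have hintegrable : Integrable h μ := (Lp.memLp h).integrable one_le_two
  refine Integrable.ae_eq_of_forall_setIntegral_eq _ _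
    ((measurePreserving_vadd x μ).integrable_comp_of_integrable hintegrable) hintegrable
    fun B hB _ => ?_
  have horth := (Submodule.mem_orthogonal _ h).1 hh _
    (indicatorConstLp_preimage_vadd_sub_mem_vanishingAverages hB (-x))
  rw [inner_sub_left, L2.inner_indicatorConstLp_one, L2.inner_indicatorConstLp_one] at horth
  have hpre : (x +ᵥ ·) ⁻¹' ((-x +ᵥ ·) ⁻¹' B) = B := by
    ext a
    simp only [Set.mem_preimage, neg_vadd_vadd]
  have hchange := (measurePreserving_vadd x μ).setIntegral_preimage_emb
    (measurableEmbedding_const_vadd x) h ((-x +ᵥ ·) ⁻¹' B)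
  rw [hpre] at hchange
  rw [hchange, sub_eq_zero.1 horth]

end Invariant

variable [IsProbabilityMeasure μ] {f : α → ℝ}

theorem eLpNorm_one_sub_integral_le (hf : Integrable f μ) :
    eLpNorm (fun a => f a - ∫ b, f b ∂μ) 1 μ ≤ eLpNorm f 1 μ + eLpNorm f 1 μ := by
  refine (eLpNorm_sub_le hf.1 aestronglyMeasurable_const le_rfl).trans ?_
  gcongr
  rw [eLpNorm_const _ one_ne_zero (IsProbabilityMeasure.ne_zero μ), measure_univ, ENNReal.one_rpow,
    mul_one, eLpNorm_one_eq_lintegral_enorm]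
  exact enorm_integral_le_lintegral_enorm f

variable [ErgodicVAdd (ι → ℤ) α μ]

theorem mem_vanishingAverages_of_integral_eq_zero {F : Lp ℝ 2 μ} (hF : ∫ a, F a ∂μ = 0) :
    F ∈ vanishingAverages ι μ := by
  rw [← isClosed_vanishingAverages.submodule_topologicalClosure_eq,
    ← Submodule.orthogonal_orthogonal_eq_closure, Submodule.mem_orthogonal]
  intro h hh
  obtain ⟨c, hc⟩ := exists_ae_eq_const_of_forall_vadd_ae_eq (Lp.stronglyMeasurable h).measurable
    (vadd_ae_eq_of_mem_orthogonal_vanishingAverages hh)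
  calc inner ℝ h F = ∫ a, c * F a ∂μ := by
        rw [L2.inner_def]
        refine integral_congr_ae ?_
        filter_upwards [hc] with a ha
        rw [ha, Function.const_apply, RCLike.inner_apply, conj_trivial, mul_comm]
    _ = 0 := by rw [integral_const_mul, hF, mul_zero]

theorem hasVanishingAverages_sub_integral_of_memLp_two (hf : MemLp f 2 μ) :
    HasVanishingAverages ι (fun a => f a - ∫ b, f b ∂μ) μ := by
  have hmem : MemLp (fun a => f a - ∫ b, f b ∂μ) 2 μ := hf.sub (memLp_const _)
  have hzero : ∫ a, hmem.toLp _ a ∂μ = 0 := by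
    rw [integral_congr_ae hmem.coeFn_toLp,
      integral_sub (hf.integrable one_le_two) (integrable_const _), integral_const,
      probReal_univ, one_smul, sub_self]
  exact HasVanishingAverages.congr_ae (mem_vanishingAverages_of_integral_eq_zero hzero)
    hmem.coeFn_toLp

theorem hasVanishingAverages_sub_integral (hf : Integrable f μ) :
    HasVanishingAverages ι (fun a => f a - ∫ b, f b ∂μ) μ := by
  refine .of_forall_exists_eLpNorm_sub_le fun ε hε => ?_
  obtain ⟨g, hfg, hg⟩ := (memLp_one_iff_integrable.2 hf).exists_simpleFunc_eLpNorm_sub_lt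
    ENNReal.one_ne_top (ENNReal.half_pos hε).ne'
  have hgi : Integrable g μ := memLp_one_iff_integrable.1 hg
  have hsub : (fun a => f a - ∫ b, f b ∂μ) - (fun a => g a - ∫ b, g b ∂μ)
      = fun a => (f - g) a - ∫ b, (f - g) b ∂μ := by
    ext a
    simp only [Pi.sub_apply, integral_sub hf hgi]
    ring
  refine ⟨_, hasVanishingAverages_sub_integral_of_memLp_two (g.memLp_of_isFiniteMeasure 2 μ),
    (hf.1.sub aestronglyMeasurable_const).sub (hgi.1.sub aestronglyMeasurable_const), ?_⟩
  rw [hsub, ← ENNReal.add_halves ε]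
  exact (eLpNorm_one_sub_integral_le (hf.sub hgi)).trans (add_le_add hfg.le hfg.le)

theorem tendsto_boxAverage_ae (hf : Integrable f μ) :
    ∀ᵐ a ∂μ, Tendsto (fun n => boxAverage ι f n a) atTop (𝓝 (∫ b, f b ∂μ)) := by
  filter_upwards [hasVanishingAverages_sub_integral (ι := ι) hf] with a ha
  have hadd := ha.add_const (∫ b, f b ∂μ)
  rw [zero_add] at hadd
  refine hadd.congr fun n => ?_
  rw [← boxAverage_const (ι := ι) (∫ b, f b ∂μ) n a, ← boxAverage_add, boxAverage_const]
  congr 1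
  ext b
  simp only [Pi.add_apply, sub_add_cancel]

end ErgodicVAdd

end ErgodicTheorem

/-! ### Boxes of elementary cubes -/

section CubeBox

theorem cubeSet_eq_Icc {d : ℕ} (Q : ElemCube d) :
    cubeSet Q = Set.Icc (fun i => ((Q i).1 : ℝ)) fun i => (Q i).1 + if (Q i).2 then 1 else 0 := by
  ext y
  exact forall_and

theorem cubeSet_subset_Icc {d : ℕ} {Q : ElemCube d} {a b : Fin d → ℝ} :
    cubeSet Q ⊆ Set.Icc a b ↔
      ∀ i, a i ≤ (Q i).1 ∧ ((Q i).1 + if (Q i).2 then 1 else 0 : ℝ) ≤ b i := by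
  have hle : (fun i => ((Q i).1 : ℝ)) ≤ fun i => ((Q i).1 + if (Q i).2 then 1 else 0 : ℝ) :=
    fun i => le_add_of_nonneg_right (by split_ifs <;> norm_num)
  rw [cubeSet_eq_Icc, Set.Icc_subset_Icc_iff hle]
  exact forall_and.symm

theorem mem_cubeSet_succ {d : ℕ} {Q : ElemCube (d + 1)} {y : Fin (d + 1) → ℝ} :
    y ∈ cubeSet Q ↔ y 0 ∈ Set.Icc ((Q 0).1 : ℝ) ((Q 0).1 + if (Q 0).2 then 1 else 0) ∧
      Fin.tail y ∈ cubeSet (Fin.tail Q) :=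
  Fin.forall_fin_succ

theorem cubeSet_subset_of_mem_support_boundaryCube : ∀ {d : ℕ} {Q R : ElemCube d},
    R ∈ (boundaryCube d Q).support → cubeSet R ⊆ cubeSet Q
  | 0, _, _, hR => by simp [boundaryCube] at hR
  | d + 1, Q, R, hR => by
    intro y hy
    rw [mem_cubeSet_succ] at hy ⊢
    rcases Finset.mem_union.1 (Finsupp.support_add hR) with hR | hR
    · split_ifs at hR with hQ
      · rcases Finset.mem_union.1 (Finsupp.support_sub hR) with hR | hR <;>
        · obtain rfl := Finset.mem_singleton.1 (Finsupp.support_single_subset hR)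
          refine ⟨?_, hy.2⟩
          have hy0 := hy.1
          simp only [hQ, Fin.cons_zero, if_true, if_false, Set.mem_Icc, Bool.false_eq_true] at hy0 ⊢
          push_cast at hy0
          exact ⟨by linarith, by linarith⟩
      · simp at hR
    · obtain ⟨R', hR', hR⟩ := Finset.mem_biUnion.1 (Finsupp.support_sum (Finsupp.support_smul hR))
      obtain rfl := Finset.mem_singleton.1 (Finsupp.support_single_subset hR)
      exact ⟨hy.1, cubeSet_subset_of_mem_support_boundaryCube hR' hy.2⟩

/-- The elementary intervals contained in `[a - n, a + n]`. -/
def elemIntervals (a : ℤ) (n : ℕ) : Finset (ℤ × Bool) :=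
  Finset.Icc (a - n) (a + n) ×ˢ {false} ∪ Finset.Ico (a - n) (a + n) ×ˢ {true}

theorem mem_elemIntervals {a : ℤ} {n : ℕ} {I : ℤ × Bool} :
    I ∈ elemIntervals a n ↔ a - n ≤ I.1 ∧ (I.1 + if I.2 then 1 else 0) ≤ a + n := by
  obtain ⟨l, b⟩ := I
  cases b <;> simp [elemIntervals]

theorem card_elemIntervals (a : ℤ) (n : ℕ) : (elemIntervals a n).card = 4 * n + 1 := by
  have hdisj : Disjoint (Finset.Icc (a - n) (a + n) ×ˢ {false})
      (Finset.Ico (a - n) (a + n) ×ˢ {true}) :=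
    Finset.disjoint_product.2 (.inr (by simp))
  rw [elemIntervals, Finset.card_union_of_disjoint hdisj, Finset.card_product,
    Finset.card_product, Int.card_Icc, Int.card_Ico, Finset.card_singleton, Finset.card_singleton]
  omega

variable {d : ℕ}

/-- The elementary cubes contained in the box `x + Λ_n`. -/
def cubeBox (x : Fin d → ℤ) (n : ℕ) : Finset (ElemCube d) :=
  Fintype.piFinset fun i => elemIntervals (x i) n

theorem mem_cubeBox {x : Fin d → ℤ} {n : ℕ} {Q : ElemCube d} :
    Q ∈ cubeBox x n ↔ ∀ i, x i - n ≤ (Q i).1 ∧ ((Q i).1 + if (Q i).2 then 1 else 0) ≤ x i + n := by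
  simp only [cubeBox, Fintype.mem_piFinset, mem_elemIntervals]

theorem card_cubeBox (x : Fin d → ℤ) (n : ℕ) : (cubeBox x n).card = (4 * n + 1) ^ d := by
  simp [cubeBox, card_elemIntervals]

theorem mem_cubeBox_iff_cubeSet_subset {x : Fin d → ℤ} {n : ℕ} {Q : ElemCube d} :
    Q ∈ cubeBox x n ↔ cubeSet Q ⊆ Set.Icc (fun i => (x i - n : ℝ)) fun i => x i + n := by
  rw [mem_cubeBox, cubeSet_subset_Icc]
  refine forall_congr' fun i => and_congr ?_ ?_
  · exact_mod_cast Iff.rfl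
  · split_ifs <;> exact_mod_cast Iff.rfl

theorem isFaceClosed_cubeBox (x : Fin d → ℤ) (n : ℕ) :
    IsFaceClosed (cubeBox x n : Set (ElemCube d)) := fun _ hQ _ hR =>
  mem_cubeBox_iff_cubeSet_subset.2 <| (cubeSet_subset_of_mem_support_boundaryCube hR).trans <|
    mem_cubeBox_iff_cubeSet_subset.1 hQ

theorem cubeSet_subset_lambda_iff {n : ℕ} {Q : ElemCube d} :
    cubeSet Q ⊆ lambda d n ↔ Q ∈ cubeBox 0 n := by
  have lambda_eq : lambda d n =
      Set.Icc (fun i => ((0 : Fin d → ℤ) i - n : ℝ)) fun i => (0 : Fin d → ℤ) i + n := by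
    ext y
    simp [lambda, Pi.le_def, forall_and]
  rw [mem_cubeBox_iff_cubeSet_subset, lambda_eq]

theorem cubeBox_subset_cubeBox {x y : Fin d → ℤ} {m n : ℕ} (hx : x ∈ latticeBox y m) :
    cubeBox x n ⊆ cubeBox y (m + n) := by
  intro Q hQ
  rw [mem_latticeBox] at hx
  rw [mem_cubeBox] at hQ ⊢
  intro i
  have := hx i
  have := hQ i
  omega

theorem disjoint_cubeBox {x y : Fin d → ℤ} {n : ℕ} (hxy : x ≠ y)
    (h : ∀ i, (x i : ZMod (2 * n + 1)) = y i) : Disjoint (cubeBox x n) (cubeBox y n) := by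
  rw [Finset.disjoint_left]
  intro Q hx hy
  rw [mem_cubeBox] at hx hy
  refine hxy (funext fun i => sub_eq_zero.1 ?_)
  refine Int.eq_zero_of_abs_lt_dvd ((ZMod.intCast_eq_intCast_iff_dvd_sub _ _ _).1 (h i).symm) ?_
  have := hx i
  have := hy i
  rw [abs_lt]
  split_ifs at * <;> push_cast <;> constructor <;> omega

theorem abs_cubeBetti_sub_sum_cubeBox_le (q : ℕ) {m k : ℕ} {S : Set (ElemCube d)}
    {J : Finset (Fin d → ℤ)} (hS : S ⊆ cubeBox (0 : Fin d → ℤ) (m + k)) (hJ : J ⊆ latticeBox 0 m)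
    (hmod : ∀ x ∈ J, ∀ y ∈ J, ∀ i, (x i : ZMod (2 * k + 1)) = y i) :
    |(cubeBetti q S : ℤ) - ∑ x ∈ J, (cubeBetti q (S ∩ cubeBox x k) : ℤ)| ≤
      (4 * (m + k) + 1) ^ d - ∑ _ ∈ J, (4 * k + 1 : ℤ) ^ d := by
  have h := abs_cubeBetti_sub_sum_le q hS (fun x _ => isFaceClosed_cubeBox x k)
    (fun x hx => cubeBox_subset_cubeBox (hJ hx))
    fun x hx y hy hxy => disjoint_cubeBox hxy (hmod x hx y hy)
  simpa only [card_cubeBox, Nat.cast_pow, Nat.cast_add, Nat.cast_mul, Nat.cast_ofNat,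
    Nat.cast_one] using h

/-- The boxes of radius `k` with centres in one of the `(2 k + 1) ^ d` residue classes modulo
`2 k + 1` are disjoint, and the estimates for the residue classes add up. -/
theorem abs_mul_cubeBetti_sub_sum_cubeBox_le (q : ℕ) {m k : ℕ} {S : Set (ElemCube d)}
    (hS : S ⊆ cubeBox (0 : Fin d → ℤ) (m + k)) :
    |(2 * k + 1 : ℤ) ^ d * cubeBetti q S -
        ∑ x ∈ latticeBox (0 : Fin d → ℤ) m, (cubeBetti q (S ∩ cubeBox x k) : ℤ)| ≤
      (2 * k + 1) ^ d * (4 * (m + k) + 1) ^ d - (2 * m + 1) ^ d * (4 * k + 1) ^ d := by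
  let residue (x : Fin d → ℤ) : Fin d → ZMod (2 * k + 1) := fun i => x i
  have per_class (r : Fin d → ZMod (2 * k + 1)) :=
    abs_cubeBetti_sub_sum_cubeBox_le q hS
      (Finset.filter_subset (fun x => residue x = r) (latticeBox 0 m)) fun x hx y hy i =>
        congrFun ((Finset.mem_filter.1 hx).2.trans (Finset.mem_filter.1 hy).2.symm) i
  have h := (Finset.abs_sum_le_sum_abs _ Finset.univ).trans
    (Finset.sum_le_sum fun r _ => per_class r)
  rw [Finset.sum_sub_distrib, Finset.sum_sub_distrib, Finset.sum_fiberwise,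
    Finset.sum_fiberwise] at h
  simpa [ZMod.card, card_latticeBox] using h

end CubeBox

/-! ### Translation invariance of Betti numbers -/

section Translation

theorem translateCube_cons {d : ℕ} (x : Fin (d + 1) → ℤ) (I : ℤ × Bool) (R : ElemCube d) :
    translateCube x (Fin.cons I R) =
      (Fin.cons (I.1 + x 0, I.2) (translateCube (Fin.tail x) R) : ElemCube (d + 1)) := by
  funext i
  cases i using Fin.cases <;> rfl

theorem boundaryCube_translateCube : ∀ {d : ℕ} (x : Fin d → ℤ) (Q : ElemCube d),
    boundaryCube d (translateCube x Q) = (boundaryCube d Q).mapDomain (translateCube x)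
  | 0, _, _ => by simp [boundaryCube]
  | d + 1, x, Q => by
    have htail : (fun i : Fin d => translateCube x Q i.succ) =
        translateCube (Fin.tail x) (fun i => Q i.succ) := rfl
    have hhead : translateCube x Q 0 = ((Q 0).1 + x 0, (Q 0).2) := rfl
    rw [boundaryCube, boundaryCube, htail, boundaryCube_translateCube, hhead,
      Finsupp.mapDomain_add]
    congr 1
    · split_ifs with hQ
      · rw [Finsupp.mapDomain_sub, Finsupp.mapDomain_single, Finsupp.mapDomain_single,
          translateCube_cons, translateCube_cons, add_right_comm]
      · rw [Finsupp.mapDomain_zero]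
    · rw [Finsupp.mapDomain_smul, Finsupp.sum_mapDomain_index (by simp) (by simp),
        Finsupp.sum, Finsupp.sum, Finsupp.mapDomain_finsetSum]
      simp only [Finsupp.mapDomain_single, translateCube_cons]

variable {d : ℕ}

/-- Translation by `x` as a permutation of the elementary cubes. -/
def translateCubeEquiv (x : Fin d → ℤ) : Equiv.Perm (ElemCube d) where
  toFun := translateCube x
  invFun := translateCube (-x)
  left_inv Q := by ext i <;> simp [translateCube]
  right_inv Q := by ext i <;> simp [translateCube]

/-- Translation by `x` as an automorphism of the module of cubical chains. -/
def translateChain (x : Fin d → ℤ) : CubChain d ≃ₗ[ℤ] CubChain d :=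
  Finsupp.mapDomain.linearEquiv ℤ ℤ (translateCubeEquiv x)

theorem boundaryHom_translateChain (x : Fin d → ℤ) (c : CubChain d) :
    boundaryHom d (translateChain x c) = translateChain x (boundaryHom d c) := by
  induction c using Finsupp.induction_linear with
  | zero => simp
  | add f g hf hg => simp only [map_add, hf, hg]
  | single Q n =>
    have hsingle : translateChain x (Finsupp.single Q n) = Finsupp.single (translateCube x Q) n :=
      Finsupp.mapDomain_single
    simp only [hsingle, boundaryHom, Finsupp.lsum_single, LinearMap.toSpanSingleton_apply,
      map_smul, boundaryCube_translateCube]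
    rfl

theorem map_translateChain_cubeChains (k : ℕ) (x : Fin d → ℤ) (S : Set (ElemCube d)) :
    (cubeChains k (translateCube x ⁻¹' S)).map (translateChain x).toLinearMap =
      cubeChains k S := by
  have himage : translateCube x '' {Q | cubeDim Q = k ∧ Q ∈ translateCube x ⁻¹' S} =
      {Q | cubeDim Q = k ∧ Q ∈ S} :=
    (translateCubeEquiv x).surjective.image_preimage {Q | cubeDim Q = k ∧ Q ∈ S}
  rw [cubeChains, cubeChains, ← himage]
  exact Finsupp.lmapDomain_supported (M := ℤ) (R := ℤ) _ _

theorem cubeBetti_preimage_translateCube (q : ℕ) (x : Fin d → ℤ) (S : Set (ElemCube d)) :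
    cubeBetti q (translateCube x ⁻¹' S) = cubeBetti q S := by
  rw [cubeBetti, cubeBetti, ← map_translateChain_cubeChains q x S,
    ← map_translateChain_cubeChains (q + 1) x S,
    homologyRank_map_equiv (boundaryHom_translateChain x)]

theorem cubeSet_translateCube_subset_iff (x : Fin d → ℤ) {Q Q' : ElemCube d} :
    cubeSet (translateCube x Q) ⊆ cubeSet (translateCube x Q') ↔ cubeSet Q ⊆ cubeSet Q' := by
  have hcubeSet (R : ElemCube d) : cubeSet (translateCube x R) =
      (Equiv.subRight fun i => (x i : ℝ)) ⁻¹' cubeSet R := by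
    ext y
    refine forall_congr' fun i => ?_
    simp only [translateCube, Int.cast_add, Set.mem_Icc, Equiv.subRight_apply, Pi.sub_apply,
      le_sub_iff_add_le, sub_le_iff_le_add, add_right_comm]
    rfl
  rw [hcubeSet, hcubeSet, (Equiv.surjective _).preimage_subset_preimage_iff]

theorem preimage_translateCube_cubeBox (x : Fin d → ℤ) (n : ℕ) :
    translateCube x ⁻¹' cubeBox x n = cubeBox (0 : Fin d → ℤ) n := by
  ext Q
  rw [Set.mem_preimage, Finset.mem_coe, Finset.mem_coe, mem_cubeBox, mem_cubeBox]
  refine forall_congr' fun i => ?_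
  cases h : (Q i).2 <;> simp only [translateCube, Pi.zero_apply, h] <;> grind

end Translation

/-! ### Betti numbers of random cubical sets -/

section OpenCubes

variable {d : ℕ}

/-- The centre of an elementary cube. An elementary cube containing it contains the whole cube. -/
def cubeCenter (Q : ElemCube d) : Fin d → ℝ :=
  fun i => (Q i).1 + if (Q i).2 then 1 / 2 else 0

theorem cubeCenter_mem_cubeSet (Q : ElemCube d) : cubeCenter Q ∈ cubeSet Q := by
  intro i
  cases h : (Q i).2 <;> norm_num [cubeCenter, h]

theorem cubeSet_subset_of_cubeCenter_mem {Q Q' : ElemCube d} (h : cubeCenter Q ∈ cubeSet Q') :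
    cubeSet Q ⊆ cubeSet Q' := by
  rw [cubeSet_eq_Icc Q', cubeSet_subset_Icc]
  intro i
  obtain ⟨hlower, hupper⟩ := h i
  have hlower_int : 2 * (Q' i).1 ≤ 2 * (Q i).1 + if (Q i).2 then 1 else 0 := by
    rify
    simp only [cubeCenter] at hlower
    split_ifs at hlower ⊢ <;> push_cast <;> linarith
  have hupper_int : (2 * (Q i).1 + if (Q i).2 then 1 else 0) ≤
      2 * (Q' i).1 + if (Q' i).2 then 2 else 0 := by
    rify
    simp only [cubeCenter] at hupper
    split_ifs at hupper ⊢ <;> push_cast <;> linarith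
  constructor
  · exact_mod_cast (by grind : (Q' i).1 ≤ (Q i).1)
  · split_ifs at * <;> norm_cast <;> omega

/-- The elementary cubes contained in `X(t)`. -/
def openCubes (ω : Config d) (t : ℝ) : Set (ElemCube d) :=
  {Q | cubeSet Q ⊆ cubSet ω t}

theorem mem_openCubes {ω : Config d} {t : ℝ} {Q : ElemCube d} :
    Q ∈ openCubes ω t ↔ ∃ Q', cubeSet Q ⊆ cubeSet Q' ∧ (ω Q' : ℝ) ≤ t := by
  constructor
  · intro hQ
    obtain ⟨Q', hQ', hmem⟩ := Set.mem_iUnion₂.1 (hQ (cubeCenter_mem_cubeSet Q))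
    exact ⟨Q', cubeSet_subset_of_cubeCenter_mem hmem, hQ'⟩
  · rintro ⟨Q', hsub, hQ'⟩
    exact hsub.trans (Set.subset_biUnion_of_mem (u := cubeSet) hQ')

theorem bettiN_eq_cubeBetti (q n : ℕ) (t : ℝ) (ω : Config d) :
    bettiN d q n t ω = cubeBetti q (openCubes ω t ∩ cubeBox (0 : Fin d → ℤ) n) := by
  rw [bettiN, betti_eq_cubeBetti]
  congr 1
  ext Q
  exact Set.subset_inter_iff.trans (and_congr_right' cubeSet_subset_lambda_iff)

theorem bettiN_le (q n : ℕ) (t : ℝ) (ω : Config d) : bettiN d q n t ω ≤ (4 * n + 1) ^ d := by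
  rw [bettiN_eq_cubeBetti, ← card_cubeBox (0 : Fin d → ℤ) n]
  have h := abs_cubeBetti_sub_le_ncard_diff q
    ((cubeBox (0 : Fin d → ℤ) n).finite_toSet.inter_of_right (openCubes ω t)) (Set.empty_subset _)
  rw [cubeBetti_empty, Nat.cast_zero, sub_zero, Nat.abs_cast, Set.sdiff_empty, Nat.cast_le] at h
  exact h.trans (Set.ncard_inter_le_ncard_right _ _ |>.trans_eq (Set.ncard_coe_finset _))

theorem preimage_translateCube_openCubes (x : Fin d → ℤ) (t : ℝ) (ω : Config d) :
    translateCube x ⁻¹' openCubes ω t = openCubes (configShift (-x) ω) t := by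
  ext Q
  simp only [Set.mem_preimage, mem_openCubes, configShift, neg_neg]
  exact ((translateCubeEquiv x).exists_congr fun Q' =>
    and_congr_left' (cubeSet_translateCube_subset_iff x).symm).symm

theorem cubeBetti_openCubes_inter_cubeBox (q n : ℕ) (x : Fin d → ℤ) (t : ℝ) (ω : Config d) :
    cubeBetti q (openCubes ω t ∩ cubeBox x n) = bettiN d q n t (configShift (-x) ω) := by
  rw [bettiN_eq_cubeBetti, ← cubeBetti_preimage_translateCube q x, Set.preimage_inter,
    preimage_translateCube_openCubes, preimage_translateCube_cubeBox]

theorem abs_mul_bettiN_sub_sum_le (q m k : ℕ) (t : ℝ) (ω : Config d) :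
    |((2 * k + 1) ^ d * bettiN d q (m + k) t ω : ℝ) -
        ∑ x ∈ latticeBox (0 : Fin d → ℤ) m, (bettiN d q k t (configShift x ω) : ℝ)| ≤
      (2 * k + 1) ^ d * (4 * (m + k) + 1) ^ d - (2 * m + 1) ^ d * (4 * k + 1) ^ d := by
  have hbox : ∀ x ∈ latticeBox (0 : Fin d → ℤ) m,
      (cubeBetti q (openCubes ω t ∩ cubeBox (0 : Fin d → ℤ) (m + k) ∩ cubeBox x k) : ℤ) =
        bettiN d q k t (configShift (-x) ω) := fun x hx => by
    rw [Set.inter_assoc, Set.inter_eq_right.2 (Finset.coe_subset.2 (cubeBox_subset_cubeBox hx)),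
      cubeBetti_openCubes_inter_cubeBox]
  have h := abs_mul_cubeBetti_sub_sum_cubeBox_le q
    (Set.inter_subset_right (s := openCubes ω t) (t := cubeBox (0 : Fin d → ℤ) (m + k)))
  rw [Finset.sum_congr rfl hbox, ← bettiN_eq_cubeBetti,
    sum_latticeBox_neg fun x => (bettiN d q k t (configShift x ω) : ℤ)] at h
  exact_mod_cast h

theorem measurable_mem_openCubes (Q : ElemCube d) :
    Measurable fun p : ℝ × Config d => Q ∈ openCubes p.2 p.1 := by
  rw [← measurableSet_setOfPred]
  simp only [mem_openCubes, Set.ofPred_exists, Set.ofPred_and]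
  refine .iUnion fun Q' => .inter (.const _) (measurableSet_le ?_ measurable_fst)
  exact measurable_subtype_coe.comp ((measurable_pi_apply Q').comp measurable_snd)

/-- In a finite box there are only finitely many possible sets of open cubes. -/
theorem measurable_bettiN (q n : ℕ) :
    Measurable fun p : ℝ × Config d => bettiN d q n p.1 p.2 := by
  let pattern (p : ℝ × Config d) (Q : cubeBox (0 : Fin d → ℤ) n) : Prop := ↑Q ∈ openCubes p.2 p.1
  have hpattern : Measurable pattern :=
    measurable_pi_iff.2 fun Q => measurable_mem_openCubes Q.1
  let bettiOf (u : cubeBox (0 : Fin d → ℤ) n → Prop) : ℕ := cubeBetti q (Subtype.val '' {Q | u Q})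
  have hcomp : (fun p : ℝ × Config d => bettiN d q n p.1 p.2) = bettiOf ∘ pattern := by
    funext p
    rw [bettiN_eq_cubeBetti, Set.inter_comm]
    exact congrArg _ (Subtype.image_preimage_coe _ _).symm
  rw [hcomp]
  exact (measurable_of_finite bettiOf).comp hpattern

end OpenCubes

/-! ### The translation action on configurations -/

section ConfigAction

variable {d : ℕ}

/-- The action of `ℤ^d` on configurations by the translations `τ_x`. -/
instance instAddActionConfig : AddAction (Fin d → ℤ) (Config d) where
  vadd := configShift
  zero_vadd ω := by
    funext Q
    refine congrArg ω (funext fun i => ?_)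
    simp [translateCube]
  add_vadd x y ω := by
    funext Q
    refine congrArg ω (funext fun i => Prod.ext ?_ rfl)
    simp only [translateCube, Pi.neg_apply, Pi.add_apply]
    ring

instance instMeasurableConstVAddConfig : MeasurableConstVAdd (Fin d → ℤ) (Config d) where
  measurable_const_vadd _ := measurable_pi_iff.2 fun _ => measurable_pi_apply _

theorem Stationary.vaddInvariantMeasure {P : Measure (Config d)} (hstat : Stationary P) :
    VAddInvariantMeasure (Fin d → ℤ) (Config d) P where
  measure_preimage_vadd x A hA := hstat x A hA

theorem ErgodicConfig.ergodicVAdd {P : Measure (Config d)} [IsProbabilityMeasure P]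
    (herg : ErgodicConfig P) (hstat : Stationary P) :
    ErgodicVAdd (Fin d → ℤ) (Config d) P := by
  have := hstat.vaddInvariantMeasure
  refine ergodicVAdd_of_forall_preimage_vadd_eq fun A hA hinv => eventuallyConst_set'.2 ?_
  refine (herg A hA hinv).imp ae_eq_empty.2 fun hP => ?_
  rwa [← prob_compl_eq_zero_iff hA, ← ae_eq_univ] at hP

end ConfigAction

/-! ### Limits of almost additive sequences -/

section AlmostAdditive

theorem tendsto_add_mul_pow_div_add_mul_pow (a b c : ℝ) {e : ℝ} (he : e ≠ 0) (d : ℕ) :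
    Tendsto (fun n : ℕ => (a + c * n) ^ d / (b + e * n) ^ d) atTop (𝓝 ((c / e) ^ d)) := by
  simpa only [div_pow] using (tendsto_add_mul_div_add_mul_atTop_nhds a b c he).pow d

/-- The limit as `n → ∞` of `|Λ_n|⁻¹ ((4n+1)^d - N)`, where `N` is the number of the `(4n+1)^d`
elementary cubes of `Λ_n` which lie in one of the disjoint translates of `Λ_k` contained in `Λ_n`
and centred in a given coset of `(2k+1)ℤ^d`, averaged over the cosets. -/
def blockDefect (d k : ℕ) : ℝ := 2 ^ d - (4 * k + 1) ^ d / (2 * k + 1) ^ d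

theorem tendsto_blockDefect (d : ℕ) : Tendsto (blockDefect d) atTop (𝓝 0) := by
  have h := (tendsto_add_mul_pow_div_add_mul_pow 1 1 4 two_ne_zero d).const_sub (2 ^ d)
  rw [show (4 / 2 : ℝ) = 2 by norm_num, sub_self] at h
  exact h.congr fun k => by rw [blockDefect, add_comm (1 : ℝ), add_comm (1 : ℝ)]

theorem tendsto_blockDefect_bound (d k : ℕ) :
    Tendsto (fun m : ℕ => ((2 * k + 1 : ℝ) ^ d * (4 * (m + k) + 1) ^ d -
        (2 * m + 1) ^ d * (4 * k + 1) ^ d) / (2 * ((m + k : ℕ) : ℝ)) ^ d / (2 * k + 1) ^ d)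
      atTop (𝓝 (blockDefect d k)) := by
  have hall := tendsto_add_mul_pow_div_add_mul_pow (4 * k + 1) (2 * k) 4 two_ne_zero d
  have hcovered := (tendsto_add_mul_pow_div_add_mul_pow 1 (2 * k) 2 two_ne_zero d).mul_const
    ((4 * k + 1 : ℝ) ^ d / (2 * k + 1) ^ d)
  have h := hall.sub hcovered
  rw [show (4 / 2 : ℝ) = 2 by norm_num, div_self two_ne_zero, one_pow, one_mul] at h
  refine h.congr fun m => ?_
  have hk : (2 * k + 1 : ℝ) ^ d ≠ 0 := by positivity
  rw [div_right_comm, sub_div, mul_div_cancel_left₀ _ hk, sub_div]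
  push_cast
  ring

variable {d k : ℕ} {u S : ℕ → ℝ} {s : ℝ}

theorem tendsto_div_two_mul_add_pow (k : ℕ)
    (hS : Tendsto (fun m : ℕ => S m / (2 * m + 1) ^ d) atTop (𝓝 s)) :
    Tendsto (fun m : ℕ => S m / (2 * ((m + k : ℕ) : ℝ)) ^ d) atTop (𝓝 s) := by
  have h := hS.mul (tendsto_add_mul_pow_div_add_mul_pow 1 (2 * k) 2 two_ne_zero d)
  rw [div_self two_ne_zero, one_pow, mul_one] at h
  refine h.congr fun m => ?_
  have hm : (1 + 2 * m : ℝ) ^ d ≠ 0 := by positivity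
  rw [add_comm (2 * m : ℝ) 1, div_mul_div_cancel₀ hm, Nat.cast_add, mul_add,
    add_comm (2 * k : ℝ)]

theorem eventually_abs_div_sub_lt
    (hu : ∀ m : ℕ, |(2 * k + 1) ^ d * u (m + k) - S m| ≤
      (2 * k + 1) ^ d * (4 * (m + k) + 1) ^ d - (2 * m + 1) ^ d * (4 * k + 1) ^ d)
    (hS : Tendsto (fun m : ℕ => S m / (2 * m + 1) ^ d) atTop (𝓝 s))
    {r : ℝ} (hr : blockDefect d k < r) :
    ∀ᶠ n : ℕ in atTop, |((2 * (n : ℝ)) ^ d)⁻¹ * u n - s / (2 * k + 1) ^ d| < r := by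
  have hK : (0 : ℝ) < (2 * k + 1) ^ d := by positivity
  have hlim := (tendsto_blockDefect_bound d k).add
    (tendsto_iff_norm_sub_tendsto_zero.1
      ((tendsto_div_two_mul_add_pow k hS).div_const ((2 * k + 1) ^ d)))
  rw [add_zero] at hlim
  rw [← map_add_atTop_eq_nat k, eventually_map]
  filter_upwards [hlim.eventually_lt_const hr] with m hm
  have hsplit : ((2 * ((m + k : ℕ) : ℝ)) ^ d)⁻¹ * u (m + k) =
      ((2 * k + 1) ^ d * u (m + k) - S m) / (2 * ((m + k : ℕ) : ℝ)) ^ d / (2 * k + 1) ^ d +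
        S m / (2 * ((m + k : ℕ) : ℝ)) ^ d / (2 * k + 1) ^ d := by
    rw [← add_div, ← add_div, sub_add_cancel, div_right_comm, mul_div_cancel_left₀ _ hK.ne',
      div_eq_inv_mul]
  rw [hsplit, add_sub_assoc]
  refine (abs_add_le _ _).trans_lt (lt_of_le_of_lt (add_le_add_left ?_ _) hm)
  rw [abs_div, abs_div, abs_of_pos hK, abs_of_nonneg (by positivity : (0 : ℝ) ≤ (2 * _) ^ d)]
  gcongr
  exact hu m

theorem abs_limsup_sub_le {a R : ℝ} (h : ∀ r > R, ∀ᶠ n in atTop, |u n - a| < r) :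
    |limsup u atTop - a| ≤ R := by
  refine le_of_forall_gt_imp_ge_of_dense fun r hr => ?_
  have hlower : ∀ᶠ n in atTop, a - r ≤ u n :=
    (h r hr).mono fun n hn => by linarith [(abs_lt.1 hn).1]
  have hupper : ∀ᶠ n in atTop, u n ≤ a + r :=
    (h r hr).mono fun n hn => by linarith [(abs_lt.1 hn).2]
  rw [abs_le]
  constructor
  · linarith [le_limsup_of_frequently_le hlower.frequently
      (isBoundedUnder_of_eventually_le hupper)]
  · linarith [limsup_le_of_le (isCoboundedUnder_le_of_eventually_le _ hlower) hupper]

theorem tendsto_of_forall_eventually_abs_sub_lt {a R : ℕ → ℝ} {l : ℝ}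
    (hR : Tendsto R atTop (𝓝 0)) (ha : ∀ k, |l - a k| ≤ R k)
    (hu : ∀ k, ∀ r > R k, ∀ᶠ n in atTop, |u n - a k| < r) : Tendsto u atTop (𝓝 l) := by
  refine Metric.tendsto_nhds.2 fun ε hε => ?_
  obtain ⟨k, hk⟩ := (hR.eventually_lt_const (half_pos hε)).exists
  filter_upwards [hu k (ε / 2) hk] with n hn
  calc dist (u n) l ≤ dist (u n) (a k) + dist l (a k) := dist_triangle_right _ _ _
    _ < ε / 2 + ε / 2 := add_lt_add_of_lt_of_le hn ((ha k).trans hk.le)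
    _ = ε := add_halves ε

end AlmostAdditive

/-! ### Lifetime sums -/

section LifetimeSum

theorem abs_integral_sub_integral_le {α : Type*} [MeasurableSpace α] {μ : Measure α}
    [IsProbabilityMeasure μ] {f g : α → ℝ} (hf : Integrable f μ) (hg : Integrable g μ) {R : ℝ}
    (h : ∀ a, |f a - g a| ≤ R) : |∫ a, f a ∂μ - ∫ a, g a ∂μ| ≤ R := by
  rw [← integral_sub hf hg]
  simpa using norm_integral_le_of_norm_le_const (μ := μ) (f := fun a => f a - g a)
    (Eventually.of_forall h)

instance isProbabilityMeasure_restrict_Ioc_zero_one :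
    IsProbabilityMeasure ((volume : Measure ℝ).restrict (Set.Ioc 0 1)) :=
  ⟨by simp⟩

variable {d : ℕ}

theorem integrable_bettiN_comp {α : Type*} [MeasurableSpace α] {μ : Measure α} [IsFiniteMeasure μ]
    (q n : ℕ) {τ : α → ℝ} {σ : α → Config d} (hτ : Measurable τ) (hσ : Measurable σ) :
    Integrable (fun a => (bettiN d q n (τ a) (σ a) : ℝ)) μ := by
  have hmeas := (measurable_bettiN q n).comp (hτ.prodMk hσ)
  refine .of_bound (measurable_from_top.comp hmeas).aestronglyMeasurable ((4 * n + 1) ^ d)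
    (Eventually.of_forall fun a => ?_)
  rw [RCLike.norm_natCast]
  exact_mod_cast bettiN_le q n (τ a) (σ a)

theorem lifetimeSum_eq_setIntegral (q n : ℕ) (ω : Config d) :
    lifetimeSum d q n ω = ∫ t in Set.Ioc (0 : ℝ) 1, (bettiN d q n t ω : ℝ) :=
  intervalIntegral.integral_of_le zero_le_one

theorem abs_mul_lifetimeSum_sub_sum_le (q m k : ℕ) (ω : Config d) :
    |(2 * k + 1) ^ d * lifetimeSum d q (m + k) ω -
        ∑ x ∈ latticeBox (0 : Fin d → ℤ) m, lifetimeSum d q k (configShift x ω)| ≤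
      (2 * k + 1) ^ d * (4 * (m + k) + 1) ^ d - (2 * m + 1) ^ d * (4 * k + 1) ^ d := by
  have hintegrable (n : ℕ) (ω' : Config d) :
      IntegrableOn (fun t => (bettiN d q n t ω' : ℝ)) (Set.Ioc 0 1) :=
    integrable_bettiN_comp q n measurable_id measurable_const
  simp only [lifetimeSum_eq_setIntegral]
  rw [← integral_const_mul, ← integral_finsetSum _ fun x _ => hintegrable k (configShift x ω)]
  exact abs_integral_sub_integral_le ((hintegrable _ ω).const_mul _)
    (integrable_finsetSum _ fun x _ => hintegrable k (configShift x ω))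
    fun t => abs_mul_bettiN_sub_sum_le q m k t ω

theorem measurable_betaHat (q : ℕ) (P : Measure (Config d)) [SFinite P] :
    Measurable (betaHat d q P) := by
  refine .limsup fun n => Measurable.const_mul ?_ _
  have hmeas : Measurable fun p : ℝ × Config d => (bettiN d q n p.1 p.2 : ℝ) :=
    measurable_from_top.comp (measurable_bettiN q n)
  exact hmeas.stronglyMeasurable.integral_prod_right'.measurable

section FiniteMeasure

variable {P : Measure (Config d)} [IsFiniteMeasure P]

theorem integrable_uncurry_bettiN (q n : ℕ) :
    Integrable (fun p : Config d × ℝ => (bettiN d q n p.2 p.1 : ℝ))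
      (P.prod (volume.restrict (Set.Ioc 0 1))) :=
  integrable_bettiN_comp q n measurable_snd measurable_fst

theorem integrable_lifetimeSum (q n : ℕ) : Integrable (lifetimeSum d q n) P :=
  (integrable_uncurry_bettiN q n).integral_prod_left.congr
    (Eventually.of_forall fun ω => (lifetimeSum_eq_setIntegral q n ω).symm)

theorem integral_lifetimeSum (q n : ℕ) :
    ∫ ω, lifetimeSum d q n ω ∂P = ∫ t in Set.Ioc (0 : ℝ) 1, ∫ ω, (bettiN d q n t ω : ℝ) ∂P := by
  simp only [lifetimeSum_eq_setIntegral]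
  exact integral_integral_swap (integrable_uncurry_bettiN q n)

end FiniteMeasure

variable {P : Measure (Config d)} [IsProbabilityMeasure P]

theorem abs_mul_integral_bettiN_sub_le (hstat : Stationary P) (q m k : ℕ) (t : ℝ) :
    |(2 * k + 1) ^ d * ∫ ω, (bettiN d q (m + k) t ω : ℝ) ∂P -
        (2 * m + 1) ^ d * ∫ ω, (bettiN d q k t ω : ℝ) ∂P| ≤
      (2 * k + 1) ^ d * (4 * (m + k) + 1) ^ d - (2 * m + 1) ^ d * (4 * k + 1) ^ d := by
  have := hstat.vaddInvariantMeasure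
  have hintegrable (n : ℕ) : Integrable (fun ω => (bettiN d q n t ω : ℝ)) P :=
    integrable_bettiN_comp q n measurable_const measurable_id
  have hshift_integrable (x : Fin d → ℤ) :
      Integrable (fun ω => (bettiN d q k t (configShift x ω) : ℝ)) P :=
    integrable_bettiN_comp q k measurable_const (measurable_const_vadd x)
  have hshift (x : Fin d → ℤ) :
      ∫ ω, (bettiN d q k t (configShift x ω) : ℝ) ∂P = ∫ ω, (bettiN d q k t ω : ℝ) ∂P :=
    integral_vadd_eq_self (g := x) fun ω => (bettiN d q k t ω : ℝ)
  have h := abs_integral_sub_integral_le ((hintegrable (m + k)).const_mul ((2 * k + 1) ^ d))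
    (integrable_finsetSum _ fun x _ => hshift_integrable x) (abs_mul_bettiN_sub_sum_le q m k t)
  rw [integral_const_mul, integral_finsetSum _ fun x _ => hshift_integrable x] at h
  simp only [hshift, Finset.sum_const, card_latticeBox, Fintype.card_fin, nsmul_eq_mul] at h
  exact_mod_cast h

theorem abs_betaHat_sub_le (hstat : Stationary P) (q k : ℕ) (t : ℝ) :
    |betaHat d q P t - (∫ ω, (bettiN d q k t ω : ℝ) ∂P) / (2 * k + 1) ^ d| ≤ blockDefect d k := by
  refine abs_limsup_sub_le fun r hr => eventually_abs_div_sub_lt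
    (fun m => abs_mul_integral_bettiN_sub_le hstat q m k t) ?_ hr
  refine tendsto_const_nhds.congr fun m => ?_
  rw [mul_div_cancel_left₀]
  positivity

theorem abs_integral_betaHat_sub_le (hstat : Stationary P) (q k : ℕ) :
    |(∫ t in (0 : ℝ)..1, betaHat d q P t) - (∫ ω, lifetimeSum d q k ω ∂P) / (2 * k + 1) ^ d| ≤
      blockDefect d k := by
  have hmean : IntegrableOn (fun t => (∫ ω, (bettiN d q k t ω : ℝ) ∂P) / (2 * k + 1) ^ d)
      (Set.Ioc 0 1) := (integrable_uncurry_bettiN q k).integral_prod_right.div_const _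
  have hdiff : IntegrableOn (fun t => betaHat d q P t -
      (∫ ω, (bettiN d q k t ω : ℝ) ∂P) / (2 * k + 1) ^ d) (Set.Ioc 0 1) :=
    Integrable.of_bound
      ((measurable_betaHat q P).aestronglyMeasurable.sub hmean.aestronglyMeasurable) _
      (Eventually.of_forall fun t => abs_betaHat_sub_le hstat q k t)
  have hbeta : IntegrableOn (betaHat d q P) (Set.Ioc 0 1) := by
    simpa only [Pi.add_def, sub_add_cancel] using hdiff.add hmean
  rw [intervalIntegral.integral_of_le zero_le_one, integral_lifetimeSum, ← integral_div]
  exact abs_integral_sub_integral_le hbeta hmean fun t => abs_betaHat_sub_le hstat q k t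

theorem tendsto_sum_lifetimeSum_configShift_ae (hstat : Stationary P) (herg : ErgodicConfig P)
    (q k : ℕ) :
    ∀ᵐ ω ∂P, Tendsto (fun m : ℕ => (∑ x ∈ latticeBox (0 : Fin d → ℤ) m,
      lifetimeSum d q k (configShift x ω)) / (2 * m + 1) ^ d) atTop
        (𝓝 (∫ ω, lifetimeSum d q k ω ∂P)) := by
  have := herg.ergodicVAdd hstat
  filter_upwards [tendsto_boxAverage_ae (ι := Fin d) (integrable_lifetimeSum (P := P) q k)]
    with ω hω
  refine hω.congr fun m => ?_
  rw [boxAverage, card_latticeBox, Fintype.card_fin]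
  push_cast
  rfl

end LifetimeSum

theorem lln_lifetime_sum_general (d q : ℕ) (P : Measure (Config d)) [IsProbabilityMeasure P]
    (hstat : Stationary P) (herg : ErgodicConfig P) :
    ∀ᵐ ω ∂P,
      Tendsto (fun n : ℕ => ((2 * (n : ℝ)) ^ d)⁻¹ * lifetimeSum d q n ω)
        atTop (𝓝 (∫ t in (0 : ℝ)..1, betaHat d q P t)) := by
  filter_upwards [ae_all_iff.2 fun k => tendsto_sum_lifetimeSum_configShift_ae hstat herg q k]
    with ω hω
  exact tendsto_of_forall_eventually_abs_sub_lt (tendsto_blockDefect d)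
    (fun k => abs_integral_betaHat_sub_le hstat q k)
    fun k r hr => eventually_abs_div_sub_lt
      (fun m => abs_mul_lifetimeSum_sub_sum_le q m k ω) (hω k) hr

/-- **LLN for lifetime sums.** Fix `0 ≤ q < d` and let `P` be a stationary and
ergodic probability measure on `Ω = [0,1]^{K^d}` whose marginal distribution functions
`F^Q(t) = P(ω_Q ≤ t)` are continuous on `[0,1]` for every elementary cube `Q`. Then,
`P`-almost surely, `|Λ_n|⁻¹ L_q^n → ∫_0^1 β̂_q(t) dt` as `n → ∞`, where
`β̂_q(t) = limsup_{n→∞} |Λ_n|⁻¹ E[β_q^n(t)]`. -/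
theorem lln_lifetime_sum (d q : ℕ) (hq : q < d)
    (P : Measure (Config d)) [IsProbabilityMeasure P]
    (hstat : Stationary P) (herg : ErgodicConfig P)
    (hcont : ∀ Q : ElemCube d,
      ContinuousOn (fun t : ℝ => (P {ω : Config d | (ω Q : ℝ) ≤ t}).toReal)
        (Set.Icc (0 : ℝ) 1)) :
    ∀ᵐ ω ∂P,
      Tendsto (fun n : ℕ => ((2 * (n : ℝ)) ^ d)⁻¹ * lifetimeSum d q n ω)
        atTop (𝓝 (∫ t in (0 : ℝ)..1, betaHat d q P t)) := by
  exact lln_lifetime_sum_general d q P hstat herg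

end
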